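/- arXiv:1912.05178 — 2 statements merged into one kernel-verified Lean document; each statement's English description precedes it below -/
import Mathlib

section
/- Lemma 2.6(ii): Let v be a classical solution of v_t = v_rr + ((m−1)/r) v_r − (b(r,t)/r²) v on [0,R] × (t1,t2), not identically zero, satisfying the boundary condition (1.5) and v(0,t) = 0 for all t ∈ (t1,t2), and let t1 < T1 < T2 < t2. If all zeros of v(·,T2) are simple and Z(v(·,T2)) = n+1, then there exist points 0 = ζ_0 < ζ_1 < ... < ζ_{n−1} < ζ_n ≤ R such that v(ζ_i,T1) = 0 for all 0 ≤ i ≤ n. In particular, Z(v(·,T1)) ≥ Z(v(·,T2)). -/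
open Set Filter


lemma aux_left_deriv (L : ℝ → ℝ) (L' t : ℝ) (h : HasDerivAt L L' t) (hneg : L' < 0) :
    ∀ᶠ s in nhdsWithin t (Iio t), L t < L s := by
  have h1 := (hasDerivAt_iff_tendsto_slope.1 h).mono_left
    (nhdsWithin_mono t (fun x (hx : x ∈ Iio t) => (ne_of_lt hx : x ∈ ({t}ᶜ : Set ℝ))))
  have h2 := h1.eventually (gt_mem_nhds hneg)
  filter_upwards [h2, self_mem_nhdsWithin] with s hs hst
  rw [slope_def_field] at hs
  have hst' : s - t < 0 := sub_neg.2 hst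
  have := (div_neg_iff.1 hs)
  rcases this with h | h
  · linarith [h.1]
  · linarith [h.2]

lemma aux_second (f f1 : ℝ → ℝ) (f2 x : ℝ) (hmax : IsLocalMax f x)
    (h1 : ∀ᶠ y in nhds x, HasDerivAt f (f1 y) y) (h2 : HasDerivAt f1 f2 x) :
    f1 x = 0 ∧ f2 ≤ 0 := by
  have hx := h1.self_of_nhds
  have e1 : f1 x = 0 := hmax.hasDerivAt_eq_zero hx
  refine ⟨e1, ?_⟩
  by_contra! hpos
  have hde : deriv f =ᶠ[nhds x] f1 := h1.mono (fun y hy => hy.deriv)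
  have hdd : deriv (deriv f) x = f2 := by rw [hde.deriv_eq]; exact h2.deriv
  have hmin : IsLocalMin f x := isLocalMin_of_deriv_deriv_pos (by rw [hdd]; exact hpos)
    (by rw [hx.deriv]; exact e1) hx.continuousAt
  have hconst : f =ᶠ[nhds x] fun _ => f x := by
    filter_upwards [hmin, hmax] with y a b using le_antisymm b a
  have : deriv f =ᶠ[nhds x] fun _ => (0:ℝ) := by
    have := hconst.deriv
    simpa using this
  have : deriv (deriv f) x = 0 := by rw [this.deriv_eq]; simp
  linarith

lemma signs_back (R T1 T2 M : ℝ) (hT : T1 ≤ T2) (n : ℕ)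
    (v vx vt vxx κ q : ℝ → ℝ → ℝ)
    (hc : ContinuousOn (fun p : ℝ × ℝ => v p.1 p.2) (Icc 0 R ×ˢ Icc T1 T2))
    (hx : ∀ r ∈ Ioo 0 R, ∀ t ∈ Icc T1 T2, HasDerivAt (fun x => v x t) (vx r t) r)
    (hxx : ∀ r ∈ Ioo 0 R, ∀ t ∈ Icc T1 T2, HasDerivAt (fun x => vx x t) (vxx r t) r)
    (ht : ∀ r ∈ Ioo 0 R, ∀ t ∈ Icc T1 T2, HasDerivAt (fun s => v r s) (vt r t) t)
    (hpde : ∀ r ∈ Ioo 0 R, ∀ t ∈ Icc T1 T2, vt r t = vxx r t + κ r t * vx r t - q r t * v r t)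
    (hq : ∀ r ∈ Ioo 0 R, ∀ t ∈ Icc T1 T2, - q r t ≤ M)
    (hv0 : ∀ t ∈ Icc T1 T2, v 0 t = 0)
    (c : Fin n → ℝ) (y : Fin n → ℝ) (hy : StrictMono y) (hyR : ∀ i, y i ∈ Icc 0 R)
    (hcy : ∀ i, 0 < c i * v (y i) T2)
    (halt : ∀ i j : Fin n, (i : ℕ) + 1 = j → c i * c j < 0)
    (hlast : ∀ i : Fin n, (i : ℕ) + 1 = n → ∀ t ∈ Icc T1 T2, c i * v R t ≤ 0) :
    ∃ x : Fin n → ℝ, StrictMono x ∧ (∀ i, x i ∈ Ioo 0 R) ∧ ∀ i, 0 < c i * v (x i) T1 := by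
  classical
  set K : ℝ := n * M + 1 with hK
  let Φ : (Fin n → ℝ) × ℝ → ℝ := fun p =>
    Real.exp (-K * p.2) * ∏ i, max (c i * v (p.1 i) p.2) 0
  let S : Set ((Fin n → ℝ) × ℝ) := ((Set.pi univ fun _ => Icc 0 R) ∩ {x | Monotone x}) ×ˢ Icc T1 T2
  have hSc : IsCompact S := by
    refine IsCompact.prod (IsCompact.inter_right (isCompact_univ_pi fun _ => isCompact_Icc) ?_)
      isCompact_Icc
    have : {x : Fin n → ℝ | Monotone x} = ⋂ i, ⋂ j, ⋂ (_ : i ≤ j), {x | x i ≤ x j} := by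
      ext x; simp [Monotone]
    rw [this]
    refine isClosed_iInter fun i => isClosed_iInter fun j => isClosed_iInter fun _ => ?_
    exact isClosed_le (continuous_apply i) (continuous_apply j)
  have hΦc : ContinuousOn Φ S := by
    refine ContinuousOn.mul (by fun_prop) ?_
    refine continuousOn_finsetProd _ fun i _ => ?_
    refine ContinuousOn.sup ?_ continuousOn_const
    refine ContinuousOn.mul continuousOn_const ?_
    refine hc.comp (f := fun p : (Fin n → ℝ) × ℝ => (p.1 i, p.2)) (by fun_prop) ?_
    intro p hp
    exact ⟨hp.1.1 i (mem_univ _), hp.2⟩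
  have hyS : (y, T2) ∈ S := ⟨⟨fun i _ => hyR i, hy.monotone⟩, ⟨hT, le_refl _⟩⟩
  obtain ⟨⟨x, t⟩, hpS, hpmax⟩ := hSc.exists_isMaxOn ⟨_, hyS⟩ hΦc
  have hxR : ∀ i, x i ∈ Icc 0 R := fun i => hpS.1.1 i (mem_univ _)
  have hxm : Monotone x := hpS.1.2
  have htI : t ∈ Icc T1 T2 := hpS.2
  have hpos : 0 < Φ (x, t) := by
    refine lt_of_lt_of_le ?_ (hpmax hyS)
    exact mul_pos (Real.exp_pos _) (Finset.prod_pos fun i _ => lt_max_of_lt_left (hcy i))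
  have hfac : ∀ i, 0 < c i * v (x i) t := by
    intro i
    by_contra! hle
    have : Φ (x, t) = 0 := by
      refine mul_eq_zero_of_right _ (Finset.prod_eq_zero (Finset.mem_univ i) ?_)
      exact max_eq_right hle
    linarith
  have hstep : ∀ i j : Fin n, (i : ℕ) + 1 = j → x i < x j := by
    intro i j hij
    refine lt_of_le_of_ne (hxm (by rw [Fin.le_def]; omega)) fun h => ?_
    have h1 := hfac i
    have h2 := hfac j
    rw [← h] at h2
    have := mul_pos h1 h2
    have h3 := halt i j hij
    have h4 := mul_nonpos_of_nonpos_of_nonneg h3.le (sq_nonneg (v (x i) t))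
    nlinarith
  have hxs : StrictMono x := by
    intro i j hij
    have hi : (i : ℕ) + 1 < n := by have := j.2; rw [Fin.lt_def] at hij; omega
    exact lt_of_lt_of_le (hstep i ⟨i + 1, hi⟩ rfl) (hxm (by rw [Fin.le_def]; exact hij))
  have hxI : ∀ i, x i ∈ Ioo 0 R := by
    intro i
    refine ⟨lt_of_le_of_ne (hxR i).1 fun h => ?_, lt_of_le_of_ne (hxR i).2 fun h => ?_⟩
    · have := hfac i
      rw [← h, hv0 t htI] at this
      simp at this
    · by_cases hi : (i : ℕ) + 1 < n
      · have := hstep i ⟨i + 1, hi⟩ rfl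
        have := (hxR ⟨i + 1, hi⟩).2
        linarith
      · have := hlast i (by have := i.2; omega) t htI
        have h2 := hfac i
        rw [h] at h2
        linarith
  by_cases htT : t = T1
  · subst htT
    exact ⟨x, hxs, hxI, hfac⟩
  exfalso
  have htT1 : T1 < t := lt_of_le_of_ne htI.1 (Ne.symm htT)
  -- spatial maximality
  have hsp : ∀ i, c i * vt (x i) t ≤ M * (c i * v (x i) t) := by
    intro i
    have hev : ∀ᶠ s in nhds (x i), s ∈ Ioo 0 R ∧ (∀ j, j < i → x j < s) ∧ (∀ j, i < j → s < x j) := by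
      refine Filter.Eventually.and (isOpen_Ioo.mem_nhds (hxI i)) (Filter.Eventually.and ?_ ?_)
      · rw [eventually_all]
        intro j
        by_cases hj : j < i
        · filter_upwards [lt_mem_nhds (hxs hj)] with s hs _ using hs
        · exact Eventually.of_forall fun s h => absurd h hj
      · rw [eventually_all]
        intro j
        by_cases hj : i < j
        · filter_upwards [gt_mem_nhds (hxs hj)] with s hs _ using hs
        · exact Eventually.of_forall fun s h => absurd h hj
    have hlm : IsLocalMax (fun s => c i * v s t) (x i) := by
      filter_upwards [hev] with s hs
      obtain ⟨hs1, hs2, hs3⟩ := hs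
      have hmem : (Function.update x i s, t) ∈ S := by
        refine ⟨⟨fun j _ => ?_, ?_⟩, htI⟩
        · by_cases hj : j = i
          · subst hj; simpa using ⟨hs1.1.le, hs1.2.le⟩
          · simpa [hj] using hxR j
        · intro j k hjk
          by_cases hj : j = i <;> by_cases hk : k = i
          · subst hj; subst hk; rfl
          · subst hj
            simp only [Function.update_self, Function.update_of_ne hk]
            exact (hs3 k (lt_of_le_of_ne hjk (Ne.symm hk))).le
          · subst hk
            simp only [Function.update_self, Function.update_of_ne hj]
            exact (hs2 j (lt_of_le_of_ne hjk hj)).le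
          · simp only [Function.update_of_ne hj, Function.update_of_ne hk]
            exact hxm hjk
      have h1 : Φ (Function.update x i s, t) ≤ Φ (x, t) := hpmax hmem
      have h2 := le_of_mul_le_mul_left h1 (Real.exp_pos _)
      simp only at h2
      rw [← Finset.mul_prod_erase _ _ (Finset.mem_univ i),
        ← Finset.mul_prod_erase Finset.univ (fun i => max (c i * v (x i) t) 0) (Finset.mem_univ i)] at h2
      have h3 : ∏ j ∈ Finset.univ.erase i, max (c j * v (Function.update x i s j) t) 0
          = ∏ j ∈ Finset.univ.erase i, max (c j * v (x j) t) 0 := by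
        refine Finset.prod_congr rfl fun j hj => ?_
        rw [Function.update_of_ne (Finset.ne_of_mem_erase hj)]
      rw [h3] at h2
      have h4 := le_of_mul_le_mul_right h2
        (Finset.prod_pos fun j _ => lt_max_of_lt_left (hfac j))
      simp only [Function.update_self] at h4
      rw [max_eq_left (hfac i).le] at h4
      exact (le_max_left _ _).trans h4
    obtain ⟨e1, e2⟩ := aux_second (fun s => c i * v s t) (fun s => c i * vx s t) (c i * vxx (x i) t)
      (x i) hlm (by
        filter_upwards [isOpen_Ioo.mem_nhds (hxI i)] with s hs
        exact (hx s hs t htI).const_mul _) ((hxx _ (hxI i) t htI).const_mul _)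
    rw [hpde _ (hxI i) t htI]
    have h5 := mul_le_mul_of_nonneg_right (hq _ (hxI i) t htI) (hfac i).le
    have : c i * (vxx (x i) t + κ (x i) t * vx (x i) t - q (x i) t * v (x i) t)
      = c i * vxx (x i) t + κ (x i) t * (c i * vx (x i) t) + (- q (x i) t) * (c i * v (x i) t) := by ring
    rw [this, e1]
    linarith
  let L : ℝ → ℝ := fun s => ∑ i, Real.log (c i * v (x i) s) - K * s
  have hL : HasDerivAt L (∑ i, (c i * vt (x i) t) / (c i * v (x i) t) - K * 1) t := by
    refine HasDerivAt.sub ?_ ((hasDerivAt_id t).const_mul K)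
    refine HasDerivAt.fun_sum fun i _ => ?_
    exact ((ht _ (hxI i) t htI).const_mul (c i)).log (hfac i).ne'
  have hneg : (∑ i, (c i * vt (x i) t) / (c i * v (x i) t) - K * 1) < 0 := by
    have : (∑ i, (c i * vt (x i) t) / (c i * v (x i) t)) ≤ ∑ _i : Fin n, M :=
      Finset.sum_le_sum fun i _ => (div_le_iff₀ (hfac i)).2 (hsp i)
    simp at this
    rw [hK]; linarith
  have hev1 := aux_left_deriv L _ t hL hneg
  have hev2 : ∀ᶠ s in nhdsWithin t (Iio t), ∀ i, 0 < c i * v (x i) s := by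
    rw [eventually_all]
    intro i
    have : ContinuousAt (fun s => c i * v (x i) s) t :=
      ((ht _ (hxI i) t htI).const_mul (c i)).continuousAt
    exact (this.eventually (lt_mem_nhds (hfac i))).filter_mono nhdsWithin_le_nhds
  have hev3 : ∀ᶠ s in nhdsWithin t (Iio t), T1 < s :=
    (lt_mem_nhds htT1 : ∀ᶠ s in nhds t, T1 < s).filter_mono nhdsWithin_le_nhds
  obtain ⟨s, ⟨hs1, hs2, hs3⟩, hst⟩ :=
    ((hev1.and (hev2.and hev3)).and self_mem_nhdsWithin).exists
  have hst' : s < t := hst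
  have hsS : (x, s) ∈ S := ⟨hpS.1, ⟨hs3.le, hst'.le.trans htI.2⟩⟩
  have hle : Φ (x, s) ≤ Φ (x, t) := hpmax hsS
  have key : ∀ s, (∀ i, 0 < c i * v (x i) s) → Φ (x, s) = Real.exp (L s) := by
    intro s hs
    simp only [Φ, L]
    rw [sub_eq_add_neg, add_comm, Real.exp_add, Real.exp_sum, neg_mul]
    congr 1
    refine Finset.prod_congr rfl fun i _ => ?_
    rw [Real.exp_log (hs i), max_eq_left (hs i).le]
  rw [key s hs2, key t hfac, Real.exp_le_exp] at hle
  linarith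


lemma pd_data (R t1 t2 : ℝ) (hR : 0 < R) (g : ℝ × ℝ → ℝ)
    (hg : ContDiffOn ℝ (⊤ : ℕ∞) g (Icc 0 R ×ˢ Ioo t1 t2)) (e : ℝ × ℝ) :
    ContDiffOn ℝ (⊤ : ℕ∞) (fun p => fderivWithin ℝ g (Icc 0 R ×ˢ Ioo t1 t2) p e)
      (Icc 0 R ×ˢ Ioo t1 t2) := by
  have hu : UniqueDiffOn ℝ (Icc 0 R ×ˢ Ioo t1 t2) :=
    (uniqueDiffOn_Icc hR).prod (uniqueDiffOn_Ioo _ _)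
  exact (hg.fderivWithin hu (m := (⊤ : ℕ∞)) (by norm_cast)).clm_apply contDiffOn_const

lemma pd_x (R t1 t2 : ℝ) (g : ℝ × ℝ → ℝ)
    (hg : ContDiffOn ℝ (⊤ : ℕ∞) g (Icc 0 R ×ˢ Ioo t1 t2)) (x t : ℝ) (hx : x ∈ Ioo 0 R)
    (ht : t ∈ Ioo t1 t2) :
    HasDerivAt (fun y => g (y, t)) (fderivWithin ℝ g (Icc 0 R ×ˢ Ioo t1 t2) (x, t) (1, 0)) x := by
  have hmem : Icc 0 R ×ˢ Ioo t1 t2 ∈ nhds (x, t) :=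
    prod_mem_nhds (Icc_mem_nhds hx.1 hx.2) (Ioo_mem_nhds ht.1 ht.2)
  have h1 : HasFDerivAt g (fderivWithin ℝ g (Icc 0 R ×ˢ Ioo t1 t2) (x, t)) (x, t) :=
    ((hg.differentiableOn (by simp)) (x, t) ⟨⟨hx.1.le, hx.2.le⟩, ht⟩).hasFDerivWithinAt.hasFDerivAt hmem
  have h2 : HasDerivAt (fun y : ℝ => (y, t)) ((1 : ℝ), (0 : ℝ)) x :=
    (hasDerivAt_id x).prodMk (hasDerivAt_const x t)
  exact h1.comp_hasDerivAt x h2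

lemma pd_t (R t1 t2 : ℝ) (g : ℝ × ℝ → ℝ)
    (hg : ContDiffOn ℝ (⊤ : ℕ∞) g (Icc 0 R ×ˢ Ioo t1 t2)) (x t : ℝ) (hx : x ∈ Icc 0 R)
    (ht : t ∈ Ioo t1 t2) :
    HasDerivAt (fun s => g (x, s)) (fderivWithin ℝ g (Icc 0 R ×ˢ Ioo t1 t2) (x, t) (0, 1)) t := by
  have h1 : HasFDerivWithinAt g (fderivWithin ℝ g (Icc 0 R ×ˢ Ioo t1 t2) (x, t))
      (Icc 0 R ×ˢ Ioo t1 t2) (x, t) :=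
    ((hg.differentiableOn (by simp)) (x, t) ⟨hx, ht⟩).hasFDerivWithinAt
  have h2 : HasDerivWithinAt (fun s : ℝ => (x, s)) ((0 : ℝ), (1 : ℝ)) (Ioo t1 t2) t :=
    ((hasDerivAt_const t x).prodMk (hasDerivAt_id t)).hasDerivWithinAt
  exact (h1.comp_hasDerivWithinAt t h2 (fun s hs => ⟨hx, hs⟩)).hasDerivAt (Ioo_mem_nhds ht.1 ht.2)

lemma smooth_data (R t1 t2 : ℝ) (hR : 0 < R) (v : ℝ → ℝ → ℝ)
    (hv : ContDiffOn ℝ (⊤ : ℕ∞) (fun p : ℝ × ℝ => v p.1 p.2) (Icc 0 R ×ˢ Ioo t1 t2)) :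
    ∃ vx vt vxx vxt : ℝ → ℝ → ℝ,
      ContinuousOn (fun p : ℝ × ℝ => vx p.1 p.2) (Icc 0 R ×ˢ Ioo t1 t2) ∧
      ContinuousOn (fun p : ℝ × ℝ => vt p.1 p.2) (Icc 0 R ×ˢ Ioo t1 t2) ∧
      ContinuousOn (fun p : ℝ × ℝ => vxx p.1 p.2) (Icc 0 R ×ˢ Ioo t1 t2) ∧
      ContinuousOn (fun p : ℝ × ℝ => vxt p.1 p.2) (Icc 0 R ×ˢ Ioo t1 t2) ∧
      (∀ x ∈ Ioo 0 R, ∀ t ∈ Ioo t1 t2, HasDerivAt (fun y => v y t) (vx x t) x) ∧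
      (∀ x ∈ Ioo 0 R, ∀ t ∈ Ioo t1 t2, HasDerivAt (fun y => vx y t) (vxx x t) x) ∧
      (∀ x ∈ Ioo 0 R, ∀ t ∈ Ioo t1 t2, HasDerivAt (fun y => vt y t) (vxt x t) x) ∧
      (∀ x ∈ Icc 0 R, ∀ t ∈ Ioo t1 t2, HasDerivAt (fun s => v x s) (vt x t) t) ∧
      (∀ x ∈ Icc 0 R, ∀ t ∈ Ioo t1 t2, HasDerivAt (fun s => vx x s) (vxt x t) t) := by
  set S := Icc 0 R ×ˢ Ioo t1 t2 with hS
  set F : ℝ × ℝ → ℝ := fun p => v p.1 p.2 with hF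
  let Fx : ℝ × ℝ → ℝ := fun p => fderivWithin ℝ F S p (1, 0)
  let Ft : ℝ × ℝ → ℝ := fun p => fderivWithin ℝ F S p (0, 1)
  have cx : ContDiffOn ℝ (⊤ : ℕ∞) Fx S := pd_data R t1 t2 hR F hv _
  have ct : ContDiffOn ℝ (⊤ : ℕ∞) Ft S := pd_data R t1 t2 hR F hv _
  refine ⟨fun x t => Fx (x, t), fun x t => Ft (x, t),
    fun x t => fderivWithin ℝ Fx S (x, t) (1, 0), fun x t => fderivWithin ℝ Fx S (x, t) (0, 1),
    cx.continuousOn, ct.continuousOn, (pd_data R t1 t2 hR Fx cx _).continuousOn,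
    (pd_data R t1 t2 hR Fx cx _).continuousOn, fun x hx t ht => pd_x R t1 t2 F hv x t hx ht,
    fun x hx t ht => pd_x R t1 t2 Fx cx x t hx ht, fun x hx t ht => ?_,
    fun x hx t ht => pd_t R t1 t2 F hv x t hx ht, fun x hx t ht => pd_t R t1 t2 Fx cx x t hx ht⟩
  have h := pd_x R t1 t2 Ft ct x t hx ht
  have key : fderivWithin ℝ Ft S (x, t) (1, 0) = fderivWithin ℝ Fx S (x, t) (0, 1) := by
    have hev : ∀ᶠ p in nhds (x, t), S ∈ nhds p := by
      have : Ioo 0 R ×ˢ Ioo t1 t2 ∈ nhds (x, t) := (isOpen_Ioo.prod isOpen_Ioo).mem_nhds ⟨hx, ht⟩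
      filter_upwards [this] with p hp
      exact prod_mem_nhds (Icc_mem_nhds hp.1.1 hp.1.2) (Ioo_mem_nhds hp.2.1 hp.2.2)
    have hm := hev.self_of_nhds
    have hvA : ContDiffAt ℝ (⊤ : ℕ∞) F (x, t) := hv.contDiffAt hm
    have hd : DifferentiableAt ℝ (fderiv ℝ F) (x, t) :=
      (hvA.fderiv_right (m := (⊤ : ℕ∞)) (by norm_cast)).differentiableAt (by simp)
    have gen : ∀ e e' : ℝ × ℝ, fderivWithin ℝ (fun p => fderivWithin ℝ F S p e) S (x, t) e'
        = fderiv ℝ (fderiv ℝ F) (x, t) e' e := by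
      intro e e'
      rw [fderivWithin_of_mem_nhds hm]
      have : (fun p => fderivWithin ℝ F S p e) =ᶠ[nhds (x, t)] fun p => fderiv ℝ F p e := by
        filter_upwards [hev] with p hp
        rw [fderivWithin_of_mem_nhds hp]
      rw [this.fderiv_eq, fderiv_clm_apply hd (by fun_prop)]
      simp
    have hs := hvA.isSymmSndFDerivAt (by simp; exact WithTop.coe_le_coe.2 (le_top : (2 : ℕ∞) ≤ ⊤))
    change fderivWithin ℝ (fun p => fderivWithin ℝ F S p (0, 1)) S (x, t) (1, 0)
      = fderivWithin ℝ (fun p => fderivWithin ℝ F S p (1, 0)) S (x, t) (0, 1)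
    rw [gen, gen]
    exact hs _ _
  rw [key] at h
  exact h


lemma same_sign (g : ℝ → ℝ) (p q : ℝ) (hpq : p ≤ q) (hg : ContinuousOn g (Icc p q))
    (hnz : ∀ x ∈ Icc p q, g x ≠ 0) : 0 < g p * g q := by
  rcases lt_or_gt_of_ne (hnz p ⟨le_refl _, hpq⟩) with h1 | h1 <;>
  rcases lt_or_gt_of_ne (hnz q ⟨hpq, le_refl _⟩) with h2 | h2
  · exact mul_pos_of_neg_of_neg h1 h2
  · obtain ⟨x, hx, hx0⟩ := intermediate_value_Icc hpq hg ⟨h1.le, h2.le⟩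
    exact absurd hx0 (hnz x hx)
  · obtain ⟨x, hx, hx0⟩ := intermediate_value_Icc' hpq hg ⟨h2.le, h1.le⟩
    exact absurd hx0 (hnz x hx)
  · exact mul_pos h1 h2

lemma sign_flip (g : ℝ → ℝ) (p s q : ℝ) (hps : p < s) (hsq : s < q) (hg : ContinuousOn g (Icc p q))
    (hs : g s = 0) (hd : deriv g s ≠ 0) (hnz : ∀ x ∈ Icc p q, x ≠ s → g x ≠ 0) :
    g p * g q < 0 := by
  have hL : ∀ x ∈ Icc p q, x < s → 0 < g p * g x := fun x hx hxs =>
    same_sign g p x hx.1 (hg.mono (Icc_subset_Icc le_rfl hx.2))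
      (fun y hy => hnz y ⟨hy.1, hy.2.trans hx.2⟩ (by linarith [hy.2]))
  have hRr : ∀ x ∈ Icc p q, s < x → 0 < g x * g q := fun x hx hxs =>
    same_sign g x q hx.2 (hg.mono (Icc_subset_Icc hx.1 le_rfl))
      (fun y hy => hnz y ⟨hx.1.trans hy.1, hy.2⟩ (by linarith [hy.1]))
  have hp0 := hnz p ⟨le_rfl, by linarith⟩ (by linarith)
  have hq0 := hnz q ⟨by linarith, le_rfl⟩ (by linarith)
  by_contra! hge
  have hpq : 0 < g p * g q := lt_of_le_of_ne hge (Ne.symm (mul_ne_zero hp0 hq0))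
  apply hd
  have hnh : Icc p q ∈ nhds s := Icc_mem_nhds hps hsq
  have hall : ∀ x ∈ Icc p q, 0 ≤ g p * g x := by
    intro x hx
    rcases lt_trichotomy x s with h | h | h
    · exact (hL x hx h).le
    · rw [h, hs]; simp
    · have h1 := hRr x hx h
      by_contra! h2
      have h3 : 0 < (g p * g q) * (g x * g q) := mul_pos hpq h1
      have h4 : (g p * g q) * (g x * g q) = (g p * g x) * (g q) ^ 2 := by ring
      rw [h4] at h3
      have := mul_nonpos_of_nonpos_of_nonneg h2.le (sq_nonneg (g q))
      linarith
  rcases lt_or_gt_of_ne hp0 with h | h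
  · have : IsLocalMax g s := by
      filter_upwards [hnh] with x hx
      rw [hs]
      by_contra! h2
      have := hall x hx
      nlinarith
    exact this.deriv_eq_zero
  · have : IsLocalMin g s := by
      filter_upwards [hnh] with x hx
      rw [hs]
      by_contra! h2
      have := hall x hx
      nlinarith
    exact this.deriv_eq_zero

lemma alt_points (R : ℝ) (hR : 0 < R) (g : ℝ → ℝ) (hg : ContinuousOn g (Icc 0 R)) (n : ℕ)
    (hsimple : ∀ r ∈ Icc (0:ℝ) R, g r = 0 → deriv g r ≠ 0)
    (hcard : {r ∈ Icc (0:ℝ) R | g r = 0}.ncard = n + 1) :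
    ∃ y : Fin n → ℝ, StrictMono y ∧ (∀ i, y i ∈ Icc 0 R) ∧ (∀ i, g (y i) ≠ 0) ∧
      (∀ i j : Fin n, (i : ℕ) + 1 = j → g (y i) * g (y j) < 0) ∧
      (∀ i : Fin n, (i : ℕ) + 1 = n → g (y i) * g R ≤ 0) := by
  classical
  have hfin : {r ∈ Icc (0:ℝ) R | g r = 0}.Finite := Set.finite_of_ncard_ne_zero (by omega)
  have hc' : hfin.toFinset.card = n + 1 := by
    rw [← Set.ncard_eq_toFinset_card _ hfin]; exact hcard
  set z := hfin.toFinset.orderEmbOfFin hc' with hz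
  have hzm : StrictMono z := z.strictMono
  have hzmem : ∀ i, z i ∈ Icc 0 R ∧ g (z i) = 0 := by
    intro i
    have := Finset.orderEmbOfFin_mem hfin.toFinset hc' i
    exact (Set.Finite.mem_toFinset hfin).1 this
  have hzs : ∀ r ∈ Icc 0 R, g r = 0 → ∃ j, z j = r := by
    intro r hr h0
    have : r ∈ Set.range z := by
      rw [hz, Finset.range_orderEmbOfFin]
      simp [h0, hr.1, hr.2]
    exact this
  let y : Fin n → ℝ := fun i => (z i.castSucc + z i.succ) / 2
  have hlt : ∀ i : Fin n, z i.castSucc < z i.succ := fun i => hzm Fin.castSucc_lt_succ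
  have hy1 : ∀ i : Fin n, z i.castSucc < y i := fun i => by
    have := hlt i; simp only [y]; linarith
  have hy2 : ∀ i : Fin n, y i < z i.succ := fun i => by
    have := hlt i; simp only [y]; linarith
  have hyR : ∀ i, y i ∈ Icc 0 R := fun i =>
    ⟨(hzmem _).1.1.trans (hy1 i).le, (hy2 i).le.trans (hzmem _).1.2⟩
  have hyz : ∀ i : Fin n, ∀ r ∈ Icc (0:ℝ) R, z i.castSucc < r → r < z i.succ → g r ≠ 0 := by
    intro i r hr h1 h2 h0
    obtain ⟨j, rfl⟩ := hzs r hr h0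
    have a := hzm.lt_iff_lt.1 h1
    have b := hzm.lt_iff_lt.1 h2
    rw [Fin.lt_def] at a b
    simp at a b
    omega
  refine ⟨y, ?_, hyR, fun i => hyz i _ (hyR i) (hy1 i) (hy2 i), ?_, ?_⟩
  · intro i j hij
    refine (hy2 i).trans_le (le_trans (hzm.monotone ?_) (hy1 j).le)
    rw [Fin.le_def]; simpa using hij
  · intro i j hij
    have e : i.succ = j.castSucc := by ext; simpa using hij
    refine sign_flip g (y i) (z i.succ) (y j) (hy2 i) (by rw [e]; exact hy1 j)
      (hg.mono (Icc_subset_Icc (hyR i).1 (hyR j).2)) (hzmem _).2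
      (hsimple _ (hzmem _).1 (hzmem _).2) ?_
    intro x hx hne
    have hxR : x ∈ Icc 0 R := ⟨(hyR i).1.trans hx.1, hx.2.trans (hyR j).2⟩
    rcases lt_or_gt_of_ne hne with h | h
    · exact hyz i x hxR ((hy1 i).trans_le hx.1) h
    · exact hyz j x hxR (by rw [← e]; exact h) (hx.2.trans_lt (hy2 j))
  · intro i hi
    by_cases hgR : g R = 0
    · rw [hgR]; simp
    have hzR : z i.succ < R := lt_of_le_of_ne (hzmem _).1.2 fun h => hgR (by rw [← h]; exact (hzmem _).2)
    refine (sign_flip g (y i) (z i.succ) R (hy2 i) hzR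
      (hg.mono (Icc_subset_Icc (hyR i).1 le_rfl)) (hzmem _).2
      (hsimple _ (hzmem _).1 (hzmem _).2) ?_).le
    intro x hx hne
    have hxR : x ∈ Icc 0 R := ⟨(hyR i).1.trans hx.1, hx.2⟩
    rcases lt_or_gt_of_ne hne with h | h
    · exact hyz i x hxR ((hy1 i).trans_le hx.1) h
    · intro h0
      obtain ⟨j, rfl⟩ := hzs x hxR h0
      have a := hzm.lt_iff_lt.1 h
      rw [Fin.lt_def] at a
      have := j.2
      simp at a
      omega

lemma alt_zeros (R : ℝ) (hR : 0 < R) (g : ℝ → ℝ) (hg : ContinuousOn g (Icc 0 R)) (n : ℕ) (h0 : g 0 = 0)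
    (c x : Fin n → ℝ) (hx : StrictMono x) (hxR : ∀ i, x i ∈ Ioo 0 R) (hcx : ∀ i, 0 < c i * g (x i))
    (halt : ∀ i j : Fin n, (i : ℕ) + 1 = j → c i * c j < 0)
    (hlast : ∀ i : Fin n, (i : ℕ) + 1 = n → c i * g R ≤ 0) :
    ∃ ζ : Fin (n + 1) → ℝ,
      ζ 0 = 0 ∧ StrictMono ζ ∧ (∀ i, ζ i ≤ R) ∧ ∀ i, g (ζ i) = 0 := by
  have ivt : ∀ (d p q : ℝ), p < q → p ∈ Icc 0 R → q ∈ Icc 0 R → 0 < d * g p → d * g q ≤ 0 →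
      ∃ s, p < s ∧ s ≤ q ∧ g s = 0 := by
    intro d p q hpq hp hq h1 h2
    have hc : ContinuousOn (fun s => d * g s) (Icc p q) :=
      continuousOn_const.mul (hg.mono (Icc_subset_Icc hp.1 hq.2))
    obtain ⟨s, hs, hs0⟩ := intermediate_value_Icc' hpq.le hc ⟨h2, h1.le⟩
    have hd : d ≠ 0 := fun h => by rw [h] at h1; simp at h1
    have hgs : g s = 0 := by simpa [hd] using hs0
    refine ⟨s, lt_of_le_of_ne hs.1 fun h => ?_, hs.2, hgs⟩
    rw [h, hgs] at h1; simp at h1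
  have hex : ∀ i : Fin n, ∃ s, x i < s ∧ s ≤ R ∧ (∀ j : Fin n, (i : ℕ) + 1 = j → s ≤ x j) ∧ g s = 0 := by
    intro i
    by_cases hi : (i : ℕ) + 1 < n
    · have hlt : x i < x ⟨i + 1, hi⟩ := hx (by rw [Fin.lt_def]; simp)
      obtain ⟨s, a, b, d⟩ := ivt (c i) (x i) (x ⟨i + 1, hi⟩) hlt (Ioo_subset_Icc_self (hxR _))
        (Ioo_subset_Icc_self (hxR _)) (hcx i) (by
          have h1 := hcx ⟨i + 1, hi⟩
          have h2 := halt i ⟨i + 1, hi⟩ rfl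
          by_contra! h3
          have h4 := mul_pos h1 h3
          have h5 := mul_nonpos_of_nonpos_of_nonneg h2.le (sq_nonneg (g (x ⟨i + 1, hi⟩)))
          nlinarith)
      refine ⟨s, a, b.trans (hxR _).2.le, ?_, d⟩
      intro j hj
      have : j = ⟨i + 1, hi⟩ := by ext; exact hj.symm
      rw [this]; exact b
    · obtain ⟨s, a, b, d⟩ := ivt (c i) (x i) R (hxR i).2 (Ioo_subset_Icc_self (hxR _))
        ⟨hR.le, le_rfl⟩ (hcx i) (hlast i (by have := i.2; omega))
      exact ⟨s, a, b, fun j hj => by have := j.2; omega, d⟩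
  choose s hs1 hs2 hs3 hs4 using hex
  refine ⟨Fin.cons 0 s, rfl, ?_, ?_, ?_⟩
  · rw [Fin.strictMono_iff_lt_succ]
    intro i
    rw [Fin.cons_succ]
    refine lt_of_le_of_lt ?_ (hs1 i)
    rcases Fin.eq_zero_or_eq_succ i.castSucc with h | ⟨j, hj⟩
    · rw [h]; simpa using (hxR i).1.le
    · rw [hj, Fin.cons_succ]
      refine hs3 j i ?_
      have := congrArg Fin.val hj
      simpa using this.symm
  · intro i
    refine Fin.cases ?_ (fun j => ?_) i
    · simpa using hR.le
    · simpa using hs2 j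
  · intro i
    refine Fin.cases ?_ (fun j => ?_) i
    · simpa using h0
    · simpa using hs4 j


lemma leib (A B a c : ℝ) (hAB : A ≤ B) (g g' : ℝ → ℝ → ℝ)
    (hg : ContinuousOn (fun p : ℝ × ℝ => g p.1 p.2) (Icc A B ×ˢ Icc a c))
    (hg' : ContinuousOn (fun p : ℝ × ℝ => g' p.1 p.2) (Icc A B ×ˢ Icc a c))
    (hd : ∀ x ∈ Ioo A B, ∀ t ∈ Ioo a c, HasDerivAt (fun s => g x s) (g' x t) t)
    (t : ℝ) (ht : t ∈ Ioo a c) :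
    HasDerivAt (fun s => ∫ x in A..B, g x s) (∫ x in A..B, g' x t) t := by
  have slice : ∀ (G : ℝ → ℝ → ℝ), ContinuousOn (fun p : ℝ × ℝ => G p.1 p.2) (Icc A B ×ˢ Icc a c) →
      ∀ s ∈ Ioo a c, IntervalIntegrable (fun x => G x s) MeasureTheory.volume A B := by
    intro G hG s hs
    refine ContinuousOn.intervalIntegrable ?_
    rw [uIcc_of_le hAB]
    exact hG.comp (f := fun x : ℝ => (x, s)) (by fun_prop) (fun x hx => ⟨hx, Ioo_subset_Icc_self hs⟩)
  obtain ⟨M, hM⟩ := ((isCompact_Icc (a := A) (b := B)).prod (isCompact_Icc (a := a) (b := c))).exists_bound_of_continuousOn hg'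
  refine (intervalIntegral.hasDerivAt_integral_of_dominated_loc_of_deriv_le
    (F := fun s x => g x s) (F' := fun s x => g' x s) (bound := fun _ => M)
    (isOpen_Ioo.mem_nhds ht) ?_ (slice g hg t ht) ?_ ?_ (by simp) ?_).2
  · filter_upwards [isOpen_Ioo.mem_nhds ht] with s hs
    have := (slice g hg s hs).aestronglyMeasurable
    rwa [uIoc_of_le hAB]
  · have := (slice g' hg' t ht).aestronglyMeasurable
    rwa [uIoc_of_le hAB]
  · refine Eventually.of_forall fun x hx s hs => ?_
    rw [uIoc_of_le hAB] at hx
    exact hM (x, s) ⟨Ioc_subset_Icc_self hx, Ioo_subset_Icc_self hs⟩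
  · have hne : ∀ᵐ x : ℝ ∂MeasureTheory.volume, x ≠ B := by
      simp [MeasureTheory.ae_iff]
    filter_upwards [hne] with x hxB hx s hs
    rw [uIoc_of_le hAB] at hx
    exact hd x ⟨hx.1, lt_of_le_of_ne hx.2 hxB⟩ s hs

lemma bdd_int (A B M : ℝ) (hAB : A ≤ B) (f : ℝ → ℝ) (hf : ContinuousOn f (Ioo A B))
    (hM : ∀ x ∈ Ioo A B, |f x| ≤ M) : IntervalIntegrable f MeasureTheory.volume A B := by
  rw [intervalIntegrable_iff_integrableOn_Ioo_of_le hAB]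
  refine MeasureTheory.IntegrableOn.of_bound (C := M) (by simp)
    (hf.aestronglyMeasurable measurableSet_Ioo) ?_
  refine (MeasureTheory.ae_restrict_iff' measurableSet_Ioo).2 (Eventually.of_forall fun x hx => ?_)
  exact hM x hx

lemma ftc3 (A B c2 c3 : ℝ) (hAB : A ≤ B) (f1 f2 f3 φ : ℝ → ℝ)
    (h1 : IntervalIntegrable f1 MeasureTheory.volume A B)
    (h2 : IntervalIntegrable f2 MeasureTheory.volume A B)
    (h3 : IntervalIntegrable f3 MeasureTheory.volume A B)
    (hφ : ContinuousOn φ (Icc A B))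
    (hd : ∀ x ∈ Ioo A B, HasDerivAt φ (f1 x + c2 * f2 x + c3 * f3 x) x) :
    (∫ x in A..B, f1 x) + c2 * (∫ x in A..B, f2 x) + c3 * (∫ x in A..B, f3 x) = φ B - φ A := by
  rw [← intervalIntegral.integral_eq_sub_of_hasDerivAt_of_le hAB hφ hd
    ((h1.add (h2.const_mul c2)).add (h3.const_mul c3)),
    intervalIntegral.integral_add (h1.add (h2.const_mul c2)) (h3.const_mul c3),
    intervalIntegral.integral_add h1 (h2.const_mul c2),
    intervalIntegral.integral_const_mul, intervalIntegral.integral_const_mul]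

lemma quad_int (A B : ℝ) (hAB : A ≤ B) (u p f w : ℝ → ℝ) (a b c : ℝ)
    (hw : ∀ x ∈ Icc A B, 0 ≤ w x)
    (huu : IntervalIntegrable (fun x => u x ^ 2 * w x) MeasureTheory.volume A B)
    (hup : IntervalIntegrable (fun x => u x * p x * w x) MeasureTheory.volume A B)
    (huf : IntervalIntegrable (fun x => u x * f x * w x) MeasureTheory.volume A B)
    (hpp : IntervalIntegrable (fun x => p x ^ 2 * w x) MeasureTheory.volume A B)
    (hpf : IntervalIntegrable (fun x => f x * p x * w x) MeasureTheory.volume A B)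
    (hff : IntervalIntegrable (fun x => f x ^ 2 * w x) MeasureTheory.volume A B) :
    0 ≤ a ^ 2 * (∫ x in A..B, u x ^ 2 * w x) + b ^ 2 * (∫ x in A..B, p x ^ 2 * w x)
      + c ^ 2 * (∫ x in A..B, f x ^ 2 * w x) + 2 * a * b * (∫ x in A..B, u x * p x * w x)
      + 2 * a * c * (∫ x in A..B, u x * f x * w x) + 2 * b * c * (∫ x in A..B, f x * p x * w x) := by
  simp only [← intervalIntegral.integral_const_mul]
  have i1 := huu.const_mul (a ^ 2)
  have i2 := hpp.const_mul (b ^ 2)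
  have i3 := hff.const_mul (c ^ 2)
  have i4 := hup.const_mul (2 * a * b)
  have i5 := huf.const_mul (2 * a * c)
  have i6 := hpf.const_mul (2 * b * c)
  rw [← intervalIntegral.integral_add i1 i2, ← intervalIntegral.integral_add (i1.add i2) i3,
    ← intervalIntegral.integral_add ((i1.add i2).add i3) i4,
    ← intervalIntegral.integral_add (((i1.add i2).add i3).add i4) i5,
    ← intervalIntegral.integral_add ((((i1.add i2).add i3).add i4).add i5) i6]
  refine intervalIntegral.integral_nonneg hAB fun x hx => ?_
  have : 0 ≤ (a * u x + b * p x + c * f x) ^ 2 * w x := mul_nonneg (sq_nonneg _) (hw x hx)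
  refine this.trans (le_of_eq ?_)
  ring

structure FD (k : ℕ) (ξ A B a c C : ℝ) (u ux ut uxx uxt z zt : ℝ → ℝ → ℝ) : Prop where
  hAB : A < B
  hA : A ≤ ξ
  hB : ξ ≤ B
  hk : k = 0 ∨ A = ξ
  hC : 0 ≤ C
  cu : ContinuousOn (fun p : ℝ × ℝ => u p.1 p.2) (Icc A B ×ˢ Icc a c)
  cux : ContinuousOn (fun p : ℝ × ℝ => ux p.1 p.2) (Icc A B ×ˢ Icc a c)
  cut : ContinuousOn (fun p : ℝ × ℝ => ut p.1 p.2) (Icc A B ×ˢ Icc a c)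
  cuxx : ContinuousOn (fun p : ℝ × ℝ => uxx p.1 p.2) (Icc A B ×ˢ Icc a c)
  cuxt : ContinuousOn (fun p : ℝ × ℝ => uxt p.1 p.2) (Icc A B ×ˢ Icc a c)
  cz : ContinuousOn (fun p : ℝ × ℝ => z p.1 p.2) (Icc A B ×ˢ Icc a c)
  czt : ContinuousOn (fun p : ℝ × ℝ => zt p.1 p.2) (Icc A B ×ˢ Icc a c)
  dux : ∀ x ∈ Ioo A B, ∀ t ∈ Ioo a c, HasDerivAt (fun y => u y t) (ux x t) x
  duxx : ∀ x ∈ Ioo A B, ∀ t ∈ Ioo a c, HasDerivAt (fun y => ux y t) (uxx x t) x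
  dutx : ∀ x ∈ Ioo A B, ∀ t ∈ Ioo a c, HasDerivAt (fun y => ut y t) (uxt x t) x
  dut : ∀ x ∈ Ioo A B, ∀ t ∈ Ioo a c, HasDerivAt (fun s => u x s) (ut x t) t
  duxt : ∀ x ∈ Ioo A B, ∀ t ∈ Ioo a c, HasDerivAt (fun s => ux x s) (uxt x t) t
  dzt : ∀ x ∈ Ioo A B, ∀ t ∈ Ioo a c, HasDerivAt (fun s => z x s) (zt x t) t
  dzx : ∀ x ∈ Ioo A B, ∀ t ∈ Ioo a c,
    HasDerivAt (fun y => (k : ℝ) * z y t) (k * ((ux x t - z x t) / (x - ξ))) x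
  hz : ∀ x ∈ Icc A B, ∀ t ∈ Ioo a c, (k : ℝ) * (z x t * (x - ξ)) = k * u x t
  hzt : ∀ x ∈ Icc A B, ∀ t ∈ Ioo a c, (k : ℝ) * (zt x t * (x - ξ)) = k * ut x t
  uA : ∀ t ∈ Ioo a c, u A t = 0
  uB : ∀ t ∈ Ioo a c, u B t = 0
  utA : ∀ t ∈ Ioo a c, ut A t = 0
  utB : ∀ t ∈ Ioo a c, ut B t = 0
  ineq : ∀ x ∈ Ioo A B, ∀ t ∈ Ioo a c,
    (ut x t - uxx x t - k / (x - ξ) * ux x t + k * z x t / (x - ξ)) ^ 2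
      ≤ C * (u x t ^ 2 + ux x t ^ 2 + k * z x t ^ 2)

/-- the weight -/
noncomputable def wgt (k : ℕ) (ξ P x t : ℝ) : ℝ :=
  (x - ξ) ^ k * Real.exp (-(x - ξ) ^ 2 / (4 * (P - t)))

lemma wgt_dt (k : ℕ) (ξ P x t : ℝ) (h : t < P) :
    HasDerivAt (fun s => wgt k ξ P x s) (-(x - ξ) ^ 2 / (4 * (P - t) ^ 2) * wgt k ξ P x t) t := by
  have hne : P - t ≠ 0 := by linarith [sub_pos.2 h] |> fun (h' : 0 < P - t) => h'.ne'
  have h1 : HasDerivAt (fun s => 4 * (P - s)) (-4) t := by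
    have := ((hasDerivAt_id t).const_sub P).const_mul 4
    simpa using this
  have h2 := ((hasDerivAt_const t (-(x - ξ) ^ 2)).fun_div h1 (by simpa using hne)).exp.const_mul ((x - ξ) ^ k)
  unfold wgt
  refine h2.congr_deriv ?_
  field_simp
  ring

lemma wgt_dx (k : ℕ) (ξ P x t : ℝ) (h : t < P) (hx : k = 0 ∨ x ≠ ξ) :
    HasDerivAt (fun y => wgt k ξ P y t)
      ((k / (x - ξ) - (x - ξ) / (2 * (P - t))) * wgt k ξ P x t) x := by
  have hne : P - t ≠ 0 := (sub_pos.2 h).ne'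
  have h0 : HasDerivAt (fun y => y - ξ) 1 x := (hasDerivAt_id x).sub_const ξ
  have h1 := ((h0.fun_pow 2).fun_neg.div_const (4 * (P - t))).exp
  have h2 := (h0.fun_pow k).fun_mul h1
  unfold wgt
  refine h2.congr_deriv ?_
  rcases hx with rfl | hx
  · simp; field_simp; ring
  · have hx' : x - ξ ≠ 0 := sub_ne_zero.2 hx
    rcases k with _ | k
    · simp; field_simp; ring
    · simp [pow_succ]; field_simp; ring

lemma wgt_cont (k : ℕ) (ξ P A B a c : ℝ) (h : c < P) :
    ContinuousOn (fun p : ℝ × ℝ => wgt k ξ P p.1 p.2) (Icc A B ×ˢ Icc a c) := by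
  unfold wgt
  refine ContinuousOn.mul (by fun_prop) (Real.continuous_exp.comp_continuousOn ?_)
  refine ContinuousOn.div (by fun_prop) (by fun_prop) ?_
  intro p hp
  have : p.2 ≤ c := hp.2.2
  have : 0 < P - p.2 := by linarith
  positivity


lemma core_id (k : ℕ) (ξ A B a c C P : ℝ) (u ux ut uxx uxt z zt : ℝ → ℝ → ℝ)
    (S : FD k ξ A B a c C u ux ut uxx uxt z zt) (hP : c < P) (t : ℝ) (ht : t ∈ Ioo a c)
    (H E : ℝ → ℝ) (hH : H = fun s => ∫ x in A..B, u x s ^ 2 * wgt k ξ P x s)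
    (hE : E = fun s => ∫ x in A..B, (ux x s ^ 2 + k * z x s ^ 2) * wgt k ξ P x s) :
    ∃ a1 a2 pp fp F D' : ℝ,
      HasDerivAt H (2 * a1 - (k + 1) / (2 * (P - t)) * H t) t ∧
      E t = a2 - a1 ∧
      HasDerivAt E D' t ∧
      D' ≤ 2 * (fp - pp) + E t / (P - t) - (k + 1) / (2 * (P - t)) * E t ∧
      (∀ α β γ : ℝ, 0 ≤ α ^ 2 * H t + β ^ 2 * pp + γ ^ 2 * F + 2 * α * β * a1 + 2 * α * γ * a2
        + 2 * β * γ * fp) ∧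
      F ≤ C * (H t + E t) := by
  have hAB := S.hAB
  have hτ : 0 < P - t := by linarith [ht.2]
  have htP : t < P := by linarith
  set τ := P - t with hτd
  have hτn : τ ≠ 0 := hτ.ne'
  have sl : ∀ (G : ℝ → ℝ → ℝ), ContinuousOn (fun p : ℝ × ℝ => G p.1 p.2) (Icc A B ×ˢ Icc a c) →
      ContinuousOn (fun x => G x t) (Icc A B) := fun G hG =>
    hG.comp (f := fun x : ℝ => (x, t)) (by fun_prop) (fun x hx => ⟨hx, Ioo_subset_Icc_self ht⟩)
  have cW := wgt_cont k ξ P A B a c hP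
  have su := sl _ S.cu
  have sux := sl _ S.cux
  have sut := sl _ S.cut
  have suxx := sl _ S.cuxx
  have suxt := sl _ S.cuxt
  have sz := sl _ S.cz
  have szt := sl _ S.czt
  have sW := sl _ cW
  have II : ∀ g : ℝ → ℝ, ContinuousOn g (Icc A B) → IntervalIntegrable g MeasureTheory.volume A B := by
    intro g hg
    refine ContinuousOn.intervalIntegrable ?_
    rwa [uIcc_of_le hAB.le]
  have hxk : ∀ x ∈ Ioo A B, k = 0 ∨ x ≠ ξ := by
    intro x hx
    rcases S.hk with h | h
    · exact Or.inl h
    · right; rw [← h]; exact hx.1.ne'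
  have hW0 : ∀ x ∈ Icc A B, 0 ≤ wgt k ξ P x t := by
    intro x hx
    refine mul_nonneg ?_ (Real.exp_pos _).le
    rcases S.hk with h | h
    · simp [h]
    · exact pow_nonneg (by rw [← h]; linarith [hx.1]) _
  let w : ℝ → ℝ := fun x => wgt k ξ P x t
  let p : ℝ → ℝ := fun x => ut x t - (x - ξ) / (2 * τ) * ux x t
  let f : ℝ → ℝ := fun x => ut x t - uxx x t - k / (x - ξ) * ux x t + k * z x t / (x - ξ)
  let e : ℝ → ℝ := fun x => ux x t ^ 2 + k * z x t ^ 2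
  have cw : ContinuousOn w (Icc A B) := sW
  have cp : ContinuousOn p (Icc A B) := by
    refine sut.sub (ContinuousOn.mul (by fun_prop) sux)
  have ce : ContinuousOn e (Icc A B) := (sux.pow 2).add (continuousOn_const.mul (sz.pow 2))
  have cf : ContinuousOn f (Ioo A B) := by
    have m := Ioo_subset_Icc_self (a := A) (b := B)
    rcases S.hk with h | h
    · have : f = fun x => ut x t - uxx x t := by
        funext x; simp [f, h]
      rw [this]; exact (sut.mono m).sub (suxx.mono m)
    · have hne : ∀ x ∈ Ioo A B, x - ξ ≠ 0 := fun x hx => by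
        rw [← h]; exact (sub_pos.2 hx.1).ne'
      exact (((sut.mono m).sub (suxx.mono m)).sub
        ((ContinuousOn.div continuousOn_const (by fun_prop) hne).mul (sux.mono m))).add
        (ContinuousOn.div (continuousOn_const.mul (sz.mono m)) (by fun_prop) hne)
  have hfb : ∀ x ∈ Ioo A B, f x ^ 2 ≤ C * (u x t ^ 2 + e x) := by
    intro x hx
    have := S.ineq x hx t ht
    simp only [f, e]; linarith
  obtain ⟨M, hM⟩ := (isCompact_Icc (a := A) (b := B)).exists_bound_of_continuousOn
    (continuousOn_const.mul ((su.pow 2).add ce) : ContinuousOn (fun x => C * (u x t ^ 2 + e x)) (Icc A B))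
  have hfM : ∀ x ∈ Ioo A B, f x ^ 2 ≤ M := fun x hx =>
    (hfb x hx).trans ((le_abs_self _).trans (hM x (Ioo_subset_Icc_self hx)))
  have if1 : IntervalIntegrable f MeasureTheory.volume A B := by
    refine bdd_int A B (1 + M) hAB.le f cf fun x hx => ?_
    have := hfM x hx
    rw [abs_le]
    constructor <;> nlinarith [sq_nonneg (f x + 1), sq_nonneg (f x - 1)]
  have if2 : IntervalIntegrable (fun x => f x ^ 2) MeasureTheory.volume A B := by
    refine bdd_int A B M hAB.le _ (cf.pow 2) fun x hx => ?_
    rw [abs_of_nonneg (sq_nonneg _)]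
    exact hfM x hx
  have icc : uIcc A B = Icc A B := uIcc_of_le hAB.le
  have iuu : IntervalIntegrable (fun x => u x t ^ 2 * w x) MeasureTheory.volume A B := II _ ((su.pow 2).mul cw)
  have iup : IntervalIntegrable (fun x => u x t * p x * w x) MeasureTheory.volume A B := II _ ((su.mul cp).mul cw)
  have ipp : IntervalIntegrable (fun x => p x ^ 2 * w x) MeasureTheory.volume A B := II _ ((cp.pow 2).mul cw)
  have iee : IntervalIntegrable (fun x => e x * w x) MeasureTheory.volume A B := II _ (ce.mul cw)
  have iuf : IntervalIntegrable (fun x => u x t * f x * w x) MeasureTheory.volume A B :=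
    (if1.mul_continuousOn (g := fun x => u x t * w x) (by rw [icc]; exact su.mul cw)).congr
      (fun x _ => by ring)
  have ipf : IntervalIntegrable (fun x => f x * p x * w x) MeasureTheory.volume A B :=
    (if1.mul_continuousOn (g := fun x => p x * w x) (by rw [icc]; exact cp.mul cw)).congr
      (fun x _ => by ring)
  have iff2 : IntervalIntegrable (fun x => f x ^ 2 * w x) MeasureTheory.volume A B :=
    if2.mul_continuousOn (g := w) (by rw [icc]; exact cw)
  have dw : ∀ x ∈ Ioo A B, HasDerivAt w ((k / (x - ξ) - (x - ξ) / (2 * τ)) * w x) x := fun x hx =>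
    wgt_dx k ξ P x t htP (hxk x hx)
  have dy : ∀ x, HasDerivAt (fun y => (y - ξ) / (2 * τ)) (1 / (2 * τ)) x := fun x =>
    ((hasDerivAt_id x).sub_const ξ).div_const _
  have hHt : H t = ∫ x in A..B, u x t ^ 2 * w x := by rw [hH]
  have hEt : E t = ∫ x in A..B, e x * w x := by rw [hE]
  have uAt := S.uA t ht
  have uBt := S.uB t ht
  have sW' : ContinuousOn (fun p : ℝ × ℝ => -(p.1 - ξ) ^ 2 / (4 * (P - p.2) ^ 2) * wgt k ξ P p.1 p.2)
      (Icc A B ×ˢ Icc a c) := by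
    refine ContinuousOn.mul (ContinuousOn.div (by fun_prop) (by fun_prop) ?_) cW
    intro q hq
    have : q.2 ≤ c := hq.2.2
    have : 0 < P - q.2 := by linarith
    positivity
  let g1 : ℝ → ℝ := fun x => 2 * u x t * ut x t * w x + u x t ^ 2 * (-(x - ξ) ^ 2 / (4 * τ ^ 2) * w x)
  let g3 : ℝ → ℝ := fun x => (2 * ux x t * uxt x t + k * (2 * z x t * zt x t)) * w x
    + e x * (-(x - ξ) ^ 2 / (4 * τ ^ 2) * w x)
  have cW1 : ContinuousOn (fun x => -(x - ξ) ^ 2 / (4 * τ ^ 2) * w x) (Icc A B) := 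
    ContinuousOn.mul (by fun_prop) cw
  have ig1 : IntervalIntegrable g1 MeasureTheory.volume A B :=
    II _ ((((continuousOn_const.mul su).mul sut).mul cw).add ((su.pow 2).mul cW1))
  have ig3 : IntervalIntegrable g3 MeasureTheory.volume A B :=
    II _ (((((continuousOn_const.mul sux).mul suxt).add
      (continuousOn_const.mul ((continuousOn_const.mul sz).mul szt))).mul cw).add (ce.mul cW1))
  have d1 : HasDerivAt H (∫ x in A..B, g1 x) t := by
    rw [hH]
    refine leib A B a c hAB.le (fun x s => u x s ^ 2 * wgt k ξ P x s)
      (fun x s => 2 * u x s * ut x s * wgt k ξ P x s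
        + u x s ^ 2 * (-(x - ξ) ^ 2 / (4 * (P - s) ^ 2) * wgt k ξ P x s))
      ((S.cu.pow 2).mul cW) ((((continuousOn_const.mul S.cu).mul S.cut).mul cW).add
        ((S.cu.pow 2).mul sW')) ?_ t ht
    intro x hx s hs
    refine (((S.dut x hx s hs).fun_pow 2).fun_mul (wgt_dt k ξ P x s (by linarith [hs.2]))).congr_deriv ?_
    simp
  have d3 : HasDerivAt E (∫ x in A..B, g3 x) t := by
    rw [hE]
    refine leib A B a c hAB.le (fun x s => (ux x s ^ 2 + k * z x s ^ 2) * wgt k ξ P x s)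
      (fun x s => (2 * ux x s * uxt x s + k * (2 * z x s * zt x s)) * wgt k ξ P x s
        + (ux x s ^ 2 + k * z x s ^ 2) * (-(x - ξ) ^ 2 / (4 * (P - s) ^ 2) * wgt k ξ P x s))
      (((S.cux.pow 2).add (continuousOn_const.mul (S.cz.pow 2))).mul cW)
      (((((continuousOn_const.mul S.cux).mul S.cuxt).add
        (continuousOn_const.mul ((continuousOn_const.mul S.cz).mul S.czt))).mul cW).add
        (((S.cux.pow 2).add (continuousOn_const.mul (S.cz.pow 2))).mul sW')) ?_ t ht
    intro x hx s hs
    refine ((((S.duxt x hx s hs).fun_pow 2).fun_add (((S.dzt x hx s hs).fun_pow 2).const_mul (k : ℝ))).fun_mul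
      (wgt_dt k ξ P x s (by linarith [hs.2]))).congr_deriv ?_
    simp
  -- identity 1
  have id1 := ftc3 A B (-2) ((k + 1) / (2 * τ)) hAB.le g1 (fun x => u x t * p x * w x)
    (fun x => u x t ^ 2 * w x) (fun x => (x - ξ) / (2 * τ) * (u x t ^ 2 * w x)) ig1 iup iuu
    (ContinuousOn.mul (by fun_prop) ((su.pow 2).mul cw)) (by
      intro x hx
      refine ((dy x).fun_mul (((S.dux x hx t ht).fun_pow 2).fun_mul (dw x hx))).congr_deriv ?_
      simp only [g1, p]
      rcases hxk x hx with h | h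
      · simp [h]; field_simp; ring
      · have := sub_ne_zero.2 h
        push_cast; field_simp; ring)
  -- identity 2
  have id2 := ftc3 A B (-1) 1 hAB.le (fun x => e x * w x) (fun x => u x t * f x * w x)
    (fun x => u x t * p x * w x) (fun x => u x t * ux x t * w x) iee iuf iup
    ((su.mul sux).mul cw) (by
      intro x hx
      refine (((S.dux x hx t ht).fun_mul (S.duxx x hx t ht)).fun_mul (dw x hx)).congr_deriv ?_
      have hz := S.hz x (Ioo_subset_Icc_self hx) t ht
      simp only [e, f, p]
      rcases hxk x hx with h | h
      · simp [h]; field_simp; ring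
      · have h1 := sub_ne_zero.2 h
        have hu : (k : ℝ) * z x t ^ 2 = k * u x t * z x t / (x - ξ) := by
          rw [← hz]; field_simp
        rw [hu]
        field_simp; ring)
  -- identity 3
  have id3 := ftc3 A B (-2) 1 hAB.le (fun x => g3 x + ((k + 1) / (2 * τ) - 1 / τ) * (e x * w x))
    (fun x => f x * p x * w x) (fun x => 2 * (p x ^ 2 * w x))
    (fun x => 2 * ux x t * p x * w x + (x - ξ) / (2 * τ) * (e x * w x))
    (ig3.add (iee.const_mul _)) ipf (ipp.const_mul 2)
    ((((continuousOn_const.mul sux).mul cp).mul cw).add (ContinuousOn.mul (by fun_prop) (ce.mul cw))) (by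
      intro x hx
      have dp : HasDerivAt p (uxt x t - (1 / (2 * τ) * ux x t + (x - ξ) / (2 * τ) * uxx x t)) x :=
        (S.dutx x hx t ht).fun_sub ((dy x).fun_mul (S.duxx x hx t ht))
      have hkz : HasDerivAt (fun y => (k : ℝ) * z y t ^ 2) (2 * k * z x t * ((ux x t - z x t) / (x - ξ))) x := by
        by_cases hk0 : k = 0
        · simp [hk0]; exact hasDerivAt_const _ _
        · have hk1 : (k : ℝ) ≠ 0 := by exact_mod_cast hk0
          have h1 := ((S.dzx x hx t ht).fun_pow 2).const_mul ((k : ℝ)⁻¹)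
          have h2 : (fun y => (k : ℝ)⁻¹ * (k * z y t) ^ 2) = fun y => (k : ℝ) * z y t ^ 2 := by
            funext y; field_simp
          rw [h2] at h1
          refine h1.congr_deriv ?_
          simp; field_simp
      have de : HasDerivAt e (2 * ux x t * uxx x t + 2 * k * z x t * ((ux x t - z x t) / (x - ξ))) x :=
        (((S.duxx x hx t ht).fun_pow 2).fun_add hkz).congr_deriv (by simp)
      refine (((((S.duxx x hx t ht).const_mul 2).fun_mul dp).fun_mul (dw x hx)).fun_add
        ((dy x).fun_mul (de.fun_mul (dw x hx)))).congr_deriv ?_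
      have hzt := S.hzt x (Ioo_subset_Icc_self hx) t ht
      simp only [e, f, p, g3]
      rcases hxk x hx with h | h
      · simp [h]; field_simp; ring
      · have h1 := sub_ne_zero.2 h
        have hu : (k : ℝ) * (2 * z x t * zt x t) = 2 * (k * ut x t) * z x t / (x - ξ) := by
          rw [← hzt]; field_simp
        rw [hu]
        field_simp; ring)
  rw [intervalIntegral.integral_add ig3 (iee.const_mul _), intervalIntegral.integral_const_mul,
    intervalIntegral.integral_const_mul] at id3
  have hkzB : (k : ℝ) * z B t ^ 2 = 0 := by
    rcases Nat.eq_zero_or_pos k with h | h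
    · simp [h]
    · have h1 : A = ξ := S.hk.resolve_left (by omega)
      have h2 := S.hz B ⟨hAB.le, le_rfl⟩ t ht
      have hk1 : (k : ℝ) ≠ 0 := by positivity
      rw [uBt] at h2
      have h3 : B - ξ ≠ 0 := by rw [← h1]; exact (sub_pos.2 hAB).ne'
      have : z B t = 0 := by simpa [hk1, h3] using h2
      rw [this]; simp
  have bdB : 2 * ux B t * p B * w B + (B - ξ) / (2 * τ) * (e B * w B) ≤ 0 := by
    have : 2 * ux B t * p B * w B + (B - ξ) / (2 * τ) * (e B * w B)
        = - ((B - ξ) / (2 * τ) * (ux B t ^ 2 * w B)) := by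
      simp only [p, e, S.utB t ht, hkzB]; ring
    rw [this]
    have h1 := hW0 B ⟨hAB.le, le_rfl⟩
    have h2 : 0 ≤ B - ξ := sub_nonneg.2 S.hB
    have h3 : 0 ≤ w B := h1
    have : 0 ≤ (B - ξ) / (2 * τ) * (ux B t ^ 2 * w B) := by positivity
    linarith
  have bdA : 0 ≤ 2 * ux A t * p A * w A + (A - ξ) / (2 * τ) * (e A * w A) := by
    rcases Nat.eq_zero_or_pos k with h | h
    · have : 2 * ux A t * p A * w A + (A - ξ) / (2 * τ) * (e A * w A)
          = ((ξ - A) / (2 * τ) * (ux A t ^ 2 * w A)) := by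
        simp only [p, e, S.utA t ht, h]; simp; ring
      rw [this]
      have h3 : 0 ≤ w A := hW0 A ⟨le_rfl, hAB.le⟩
      have h2 : 0 ≤ ξ - A := sub_nonneg.2 S.hA
      positivity
    · have h1 : A = ξ := S.hk.resolve_left (by omega)
      have : w A = 0 := by
        simp only [w, wgt, h1, sub_self]
        rw [zero_pow (by omega)]; simp
      rw [this]; simp
  refine ⟨∫ x in A..B, u x t * p x * w x, ∫ x in A..B, u x t * f x * w x,
    ∫ x in A..B, p x ^ 2 * w x, ∫ x in A..B, f x * p x * w x, ∫ x in A..B, f x ^ 2 * w x,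
    ∫ x in A..B, g3 x, ?_, ?_, d3, ?_, ?_, ?_⟩
  · refine d1.congr_deriv ?_
    rw [hHt]
    simp only [uAt, uBt] at id1
    simp at id1
    linarith
  · rw [hEt]
    simp only [uAt, uBt] at id2
    simp at id2
    linarith
  · rw [hEt, div_eq_mul_inv, mul_comm _ τ⁻¹, ← one_div]
    have : ((k + 1) / (2 * τ) - 1 / τ) * (∫ x in A..B, e x * w x)
      = (k + 1) / (2 * τ) * (∫ x in A..B, e x * w x) - 1 / τ * (∫ x in A..B, e x * w x) := by ring
    linarith
  · intro α β γ
    rw [hHt]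
    exact quad_int A B hAB.le (fun x => u x t) p f w α β γ hW0 iuu iup iuf ipp ipf iff2
  · rw [hHt, hEt, ← intervalIntegral.integral_add iuu iee, ← intervalIntegral.integral_const_mul]
    refine intervalIntegral.integral_mono_on_of_le_Ioo hAB.le iff2 ((iuu.add iee).const_mul C) ?_
    intro x hx
    have := mul_le_mul_of_nonneg_right (hfb x hx) (hW0 x (Ioo_subset_Icc_self hx))
    refine this.trans (le_of_eq ?_)
    simp only [w]; ring


set_option maxHeartbeats 1000000 in
lemma freq_ode (k K : ℕ) (C t0 T ε h00 D00 : ℝ) (hC : 0 ≤ C) (ht : t0 < T) (hε : 0 < ε)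
    (hε1 : ε ≤ 1) (hh : 0 < h00) (H E : ℝ → ℝ)
    (hH : ∀ t ∈ Icc t0 T, 0 < H t) (hE : ∀ t ∈ Icc t0 T, 0 ≤ E t)
    (hH0 : h00 ≤ H t0) (hE0 : E t0 ≤ D00)
    (hK : (1 + C) * (T - t0 + 1) + (C + 2) * (((T - t0 + 1) * D00 / h00 + (T - t0 + 1)) *
      Real.exp (C / 2 * (T - t0))) + (k + 1) / 2 ≤ K)
    (hc : ∀ t ∈ Icc t0 T, ∃ a1 a2 pp fp F D' : ℝ,
      HasDerivAt H (2 * a1 - (k + 1) / (2 * (T + ε - t)) * H t) t ∧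
      E t = a2 - a1 ∧
      HasDerivAt E D' t ∧
      D' ≤ 2 * (fp - pp) + E t / (T + ε - t) - (k + 1) / (2 * (T + ε - t)) * E t ∧
      (∀ α β γ : ℝ, 0 ≤ α ^ 2 * H t + β ^ 2 * pp + γ ^ 2 * F + 2 * α * β * a1 + 2 * α * γ * a2
        + 2 * β * γ * fp) ∧
      F ≤ C * (H t + E t)) :
    h00 / (T - t0 + 1) ^ K * ε ^ K ≤ H T := by
  set d := T - t0 with hd
  have hd0 : 0 < d := sub_pos.2 ht
  choose! a1 a2 pp fp F D' c1 c2 c3 c4 c5 c6 using hc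
  have hτ : ∀ t ∈ Icc t0 T, 0 < T + ε - t := fun t h => by linarith [h.2]
  have hτ1 : ∀ t ∈ Icc t0 T, T + ε - t ≤ d + 1 := fun t h => by linarith [h.1]
  let N : ℝ → ℝ := fun t => (T + ε - t) * E t / H t
  have dτ : ∀ t : ℝ, HasDerivAt (fun s => T + ε - s) (-1) t := fun t => by
    simpa using (hasDerivAt_id t).const_sub (T + ε)
  have dN : ∀ t ∈ Icc t0 T, ∃ N' : ℝ, HasDerivAt N N' t ∧ N' ≤ C / 2 * (N t + d + 1) := by
    intro t h
    have hp := hH t h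
    have hτt := hτ t h
    refine ⟨_, (((dτ t).fun_mul (c3 t h)).fun_div (c1 t h) hp.ne'), ?_⟩
    have e2 := c2 t h
    have e4 := c4 t h
    have e5 := c5 t h (-(a1 t - a2 t / 2)) (H t) (-(H t) / 2)
    have e6 := c6 t h
    simp only [N]
    have hN : (T + ε - t) * E t / H t + d + 1 = ((T + ε - t) * E t + (d + 1) * H t) / H t := by
      field_simp; ring
    rw [hN, mul_div_assoc', div_le_div_iff₀ (by positivity) hp]
    have hτ1t := hτ1 t h
    set τ := T + ε - t
    have q1 : (a1 t - a2 t / 2) ^ 2 ≤ H t * (pp t - fp t + F t / 4) := by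
      have : 0 ≤ H t * (H t * (pp t - fp t + F t / 4) - (a1 t - a2 t / 2) ^ 2) := by
        refine e5.trans (le_of_eq ?_); ring
      have := (mul_nonneg_iff_of_pos_left hp).1 this
      linarith
    have q2 : τ * D' t ≤ 2 * τ * (fp t - pp t) + E t - (k + 1) / 2 * E t := by
      have := mul_le_mul_of_nonneg_left e4 hτt.le
      refine this.trans (le_of_eq ?_)
      field_simp
    have key : (-1 * E t + τ * D' t) * H t - τ * E t * (2 * a1 t - (k + 1) / (2 * τ) * H t)
        ≤ C / 2 * (τ * E t + (d + 1) * H t) * H t := by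
      have r1 : τ * E t * (2 * a1 t - (k + 1) / (2 * τ) * H t)
          = 2 * τ * E t * a1 t - (k + 1) / 2 * E t * H t := by field_simp
      rw [r1]
      have r2 := mul_le_mul_of_nonneg_right q2 hp.le
      have r3 : 2 * τ * (H t * (fp t - pp t) - a1 t * E t) ≤ 2 * τ * (H t * F t / 4) := by
        refine mul_le_mul_of_nonneg_left ?_ (by positivity)
        rw [e2]
        nlinarith [sq_nonneg (a2 t)]
      have r4 : 2 * τ * (H t * F t / 4) ≤ 2 * τ * (H t * (C * (H t + E t)) / 4) := by gcongr
      have r5 : C / 2 * (τ * H t) * H t ≤ C / 2 * ((d + 1) * H t) * H t := by gcongr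
      nlinarith
    rw [sq, ← mul_assoc]
    exact mul_le_mul_of_nonneg_right key hp.le
  choose! N' n1 n2 using dN
  let G : ℝ → ℝ := fun t => (N t + d + 1) * Real.exp (-(C / 2 * t))
  have dG : ∀ t ∈ Icc t0 T, HasDerivAt G ((N' t - C / 2 * (N t + d + 1)) * Real.exp (-(C / 2 * t))) t := by
    intro t h
    have h1 : HasDerivAt (fun s => Real.exp (-(C / 2 * s))) (Real.exp (-(C / 2 * t)) * (-(C / 2 * 1))) t :=
      (((hasDerivAt_id t).const_mul (C / 2)).fun_neg).exp
    have := (((n1 t h).add_const d).add_const 1).fun_mul h1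
    refine this.congr_deriv ?_
    ring
  have aG : AntitoneOn G (Icc t0 T) := by
    refine antitoneOn_of_deriv_nonpos (convex_Icc _ _) (fun t h => (dG t h).continuousAt.continuousWithinAt)
      (fun t h => (dG t (interior_subset h)).differentiableAt.differentiableWithinAt) ?_
    intro t h
    have h := interior_subset h
    rw [(dG t h).deriv]
    refine mul_nonpos_of_nonpos_of_nonneg ?_ (Real.exp_pos _).le
    linarith [n2 t h]
  set N1 := ((d + 1) * D00 / h00 + (d + 1)) * Real.exp (C / 2 * d) with hN1
  have hNb : ∀ t ∈ Icc t0 T, N t ≤ N1 := by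
    intro t h
    have h0 : t0 ∈ Icc t0 T := ⟨le_rfl, ht.le⟩
    have g1 := aG h0 h h.1
    have p0 := hE t0 h0
    have g2 : N t0 ≤ (d + 1) * D00 / h00 := by
      simp only [N]
      have := hτ1 t0 h0
      have := hτ t0 h0
      have : 0 ≤ D00 := p0.trans hE0
      have : 0 ≤ (d + 1) * D00 := by positivity
      gcongr
    have g3 : (N t + d + 1) ≤ (N t0 + d + 1) * Real.exp (C / 2 * (t - t0)) := by
      have e1 : (N t + d + 1) = G t * Real.exp (C / 2 * t) := by
        simp only [G]; rw [mul_assoc, ← Real.exp_add]; simp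
      have e2 : (N t0 + d + 1) * Real.exp (C / 2 * (t - t0)) = G t0 * Real.exp (C / 2 * t) := by
        simp only [G]; rw [mul_assoc, ← Real.exp_add]; ring_nf
      rw [e1, e2]
      gcongr
    have g4 : 0 ≤ D00 := p0.trans hE0
    have g5 : (N t0 + d + 1) * Real.exp (C / 2 * (t - t0)) ≤ N1 := by
      rw [hN1]
      have : t - t0 ≤ d := by linarith [h.2]
      apply mul_le_mul
      · linarith
      · apply Real.exp_le_exp.2; gcongr
      · positivity
      · positivity
    linarith
  let Q : ℝ → ℝ := fun t => H t / (T + ε - t) ^ K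
  have dQ : ∀ t ∈ Icc t0 T, ∃ q, HasDerivAt Q q t ∧ 0 ≤ q := by
    intro t h
    have hp := hH t h
    have hτt := hτ t h
    have hτ1t := hτ1 t h
    refine ⟨_, (c1 t h).fun_div ((dτ t).fun_pow K) (by positivity), ?_⟩
    refine div_nonneg ?_ (by positivity)
    have hKpos : (0 : ℝ) < K := by
      refine lt_of_lt_of_le ?_ hK
      have : 0 ≤ E t0 := hE t0 ⟨le_rfl, ht.le⟩
      have : 0 ≤ D00 := this.trans hE0
      positivity
    obtain ⟨j, rfl⟩ : ∃ j, K = j + 1 := ⟨K - 1, by have : 0 < K := (by exact_mod_cast hKpos); omega⟩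
    have e2 := c2 t h
    have e5 := c5 t h 1 0 1
    have e6 := c6 t h
    have hn := hNb t h
    simp only [N] at hn
    have hEt := hE t h
    set τ := T + ε - t
    rw [div_le_iff₀ hp] at hn
    have r1 : 0 ≤ τ * (2 * a1 t) - (k + 1) / 2 * H t + ((j + 1 : ℕ) : ℝ) * H t := by
      have s1 : -(H t + C * (H t + E t)) ≤ 2 * a2 t := by linarith
      have s2 : -(H t + C * (H t + E t)) - 2 * E t ≤ 2 * a1 t := by linarith
      have s3 := mul_le_mul_of_nonneg_left s2 hτt.le
      have s4 := mul_le_mul_of_nonneg_right hK hp.le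
      have s5 : (1 + C) * τ * H t ≤ (1 + C) * (d + 1) * H t := by gcongr
      have s6 := mul_le_mul_of_nonneg_left hn (by positivity : 0 ≤ C + 2)
      nlinarith
    have r2 : (2 * a1 t - (k + 1) / (2 * τ) * H t) * τ ^ (j + 1) - H t * (((j + 1 : ℕ) : ℝ) * τ ^ (j + 1 - 1) * -1)
        = τ ^ j * (τ * (2 * a1 t) - (k + 1) / 2 * H t + ((j + 1 : ℕ) : ℝ) * H t) := by
      simp only [Nat.add_sub_cancel]
      field_simp
      ring
    rw [r2]
    positivity
  choose! q q1 q2 using dQ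
  have mQ : MonotoneOn Q (Icc t0 T) := by
    refine monotoneOn_of_deriv_nonneg (convex_Icc _ _) (fun t h => (q1 t h).continuousAt.continuousWithinAt)
      (fun t h => (q1 t (interior_subset h)).differentiableAt.differentiableWithinAt) ?_
    intro t h
    have h := interior_subset h
    rw [(q1 t h).deriv]
    exact q2 t h
  have h0 : t0 ∈ Icc t0 T := ⟨le_rfl, ht.le⟩
  have h1 : T ∈ Icc t0 T := ⟨ht.le, le_rfl⟩
  have fin := mQ h0 h1 ht.le
  simp only [Q] at fin
  have hb : h00 / (d + 1) ^ K ≤ H t0 / (T + ε - t0) ^ K := by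
    have a1 := hτ1 t0 h0
    have a2 := hτ t0 h0
    have a3 := hH t0 h0
    gcongr
  have hb2 := hb.trans fin
  rw [add_sub_cancel_left, le_div_iff₀ (by positivity)] at hb2
  exact hb2


lemma FD.mono {k : ℕ} {ξ A B a c c' C : ℝ} {u ux ut uxx uxt z zt : ℝ → ℝ → ℝ}
    (S : FD k ξ A B a c C u ux ut uxx uxt z zt) (h : c' ≤ c) :
    FD k ξ A B a c' C u ux ut uxx uxt z zt := by
  have h1 : Icc A B ×ˢ Icc a c' ⊆ Icc A B ×ˢ Icc a c := prod_mono le_rfl (Icc_subset_Icc_right h)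
  have h2 : ∀ t, t ∈ Ioo a c' → t ∈ Ioo a c := fun t ht => ⟨ht.1, ht.2.trans_le h⟩
  exact
  { hAB := S.hAB, hA := S.hA, hB := S.hB, hk := S.hk, hC := S.hC
    cu := S.cu.mono h1, cux := S.cux.mono h1, cut := S.cut.mono h1, cuxx := S.cuxx.mono h1
    cuxt := S.cuxt.mono h1, cz := S.cz.mono h1, czt := S.czt.mono h1
    dux := fun x hx t ht => S.dux x hx t (h2 t ht)
    duxx := fun x hx t ht => S.duxx x hx t (h2 t ht)
    dutx := fun x hx t ht => S.dutx x hx t (h2 t ht)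
    dut := fun x hx t ht => S.dut x hx t (h2 t ht)
    duxt := fun x hx t ht => S.duxt x hx t (h2 t ht)
    dzt := fun x hx t ht => S.dzt x hx t (h2 t ht)
    dzx := fun x hx t ht => S.dzx x hx t (h2 t ht)
    hz := fun x hx t ht => S.hz x hx t (h2 t ht)
    hzt := fun x hx t ht => S.hzt x hx t (h2 t ht)
    uA := fun t ht => S.uA t (h2 t ht)
    uB := fun t ht => S.uB t (h2 t ht)
    utA := fun t ht => S.utA t (h2 t ht)
    utB := fun t ht => S.utB t (h2 t ht)
    ineq := fun x hx t ht => S.ineq x hx t (h2 t ht) }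

lemma freq (k : ℕ) (ξ A B a c C : ℝ) (u ux ut uxx uxt z zt : ℝ → ℝ → ℝ)
    (S : FD k ξ A B a c C u ux ut uxx uxt z zt) (t0 T x0 : ℝ) (h0 : a < t0) (h1 : t0 < T)
    (h2 : T < c) (hx0 : x0 ∈ Ioo A B) (hne : ∀ t ∈ Icc t0 T, u x0 t ≠ 0) :
    ∃ c0 : ℝ, 0 < c0 ∧ ∃ K : ℕ, ∀ ε : ℝ, 0 < ε → ε ≤ 1 →
      c0 * ε ^ K ≤ ∫ x in A..B, u x T ^ 2 * wgt k ξ (T + ε) x T := by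
  have hAB := S.hAB
  have hI : ∀ t ∈ Icc t0 T, t ∈ Icc a c := fun t ht => ⟨by linarith [ht.1], by linarith [ht.2]⟩
  have sl : ∀ (G : ℝ → ℝ → ℝ), ContinuousOn (fun p : ℝ × ℝ => G p.1 p.2) (Icc A B ×ˢ Icc a c) →
      ∀ t ∈ Icc t0 T, ContinuousOn (fun x => G x t) (Icc A B) := fun G hG t ht =>
    hG.comp (f := fun x : ℝ => (x, t)) (by fun_prop) (fun x hx => ⟨hx, hI t ht⟩)
  have II : ∀ g : ℝ → ℝ, ContinuousOn g (Icc A B) → IntervalIntegrable g MeasureTheory.volume A B := by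
    intro g hg
    refine ContinuousOn.intervalIntegrable ?_
    rwa [uIcc_of_le hAB.le]
  have hpw0 : ∀ x ∈ Icc A B, 0 ≤ (x - ξ) ^ k := by
    intro x hx
    rcases S.hk with h | h
    · simp [h]
    · exact pow_nonneg (by rw [← h]; linarith [hx.1]) _
  have hpw1 : 0 < (x0 - ξ) ^ k := by
    rcases S.hk with h | h
    · simp [h]
    · exact pow_pos (by rw [← h]; linarith [hx0.1]) _
  have cwg : ∀ P t : ℝ, ContinuousOn (fun x => wgt k ξ P x t) (Icc A B) := by
    intro P t; unfold wgt; fun_prop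
  have m0 : t0 ∈ Icc t0 T := ⟨le_rfl, h1.le⟩
  have Hpos : ∀ P, ∀ t ∈ Icc t0 T, 0 < ∫ x in A..B, u x t ^ 2 * wgt k ξ P x t := by
    intro P t ht
    refine intervalIntegral.integral_pos hAB (((sl _ S.cu t ht).pow 2).mul (cwg P t)) ?_
      ⟨x0, Ioo_subset_Icc_self hx0, ?_⟩
    · intro x hx
      have := hpw0 x (Ioc_subset_Icc_self hx)
      unfold wgt
      positivity
    · have := hne t ht
      unfold wgt
      positivity
  set h00 := ∫ x in A..B, u x t0 ^ 2 * wgt k ξ T x t0 with hh00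
  set D00 := ∫ x in A..B, (ux x t0 ^ 2 + k * z x t0 ^ 2) * (x - ξ) ^ k with hD00
  have hh : 0 < h00 := Hpos T t0 m0
  obtain ⟨K, hK⟩ := exists_nat_ge ((1 + C) * (T - t0 + 1) + (C + 2) * (((T - t0 + 1) * D00 / h00 + (T - t0 + 1)) *
      Real.exp (C / 2 * (T - t0))) + (k + 1) / 2)
  refine ⟨h00 / (T - t0 + 1) ^ K, by have := sub_pos.2 h1; positivity, K, fun ε hε hε1 => ?_⟩
  refine freq_ode k K C t0 T ε h00 D00 S.hC h1 hε hε1 hh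
    (fun s => ∫ x in A..B, u x s ^ 2 * wgt k ξ (T + ε) x s)
    (fun s => ∫ x in A..B, (ux x s ^ 2 + k * z x s ^ 2) * wgt k ξ (T + ε) x s)
    (fun t ht => Hpos _ t ht) ?_ ?_ ?_ hK ?_
  · intro t ht
    refine intervalIntegral.integral_nonneg hAB.le fun x hx => ?_
    have := hpw0 x hx
    unfold wgt
    positivity
  · refine intervalIntegral.integral_mono_on hAB.le (II _ (((sl _ S.cu t0 m0).pow 2).mul (cwg _ _)))
      (II _ (((sl _ S.cu t0 m0).pow 2).mul (cwg _ _))) fun x hx => ?_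
    have := hpw0 x hx
    refine mul_le_mul_of_nonneg_left ?_ (sq_nonneg _)
    unfold wgt
    refine mul_le_mul_of_nonneg_left ?_ this
    refine Real.exp_le_exp.2 ?_
    have h3 : 0 < T - t0 := sub_pos.2 h1
    rw [neg_div, neg_div]
    refine neg_le_neg ?_
    apply div_le_div_of_nonneg_left (sq_nonneg _) (by positivity)
    linarith
  · have ce : ContinuousOn (fun x => ux x t0 ^ 2 + k * z x t0 ^ 2) (Icc A B) :=
      ((sl _ S.cux t0 m0).pow 2).add (continuousOn_const.mul ((sl _ S.cz t0 m0).pow 2))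
    refine intervalIntegral.integral_mono_on hAB.le (II _ (ce.mul (cwg _ _)))
      (II _ (ce.mul (by fun_prop))) fun x hx => ?_
    have := hpw0 x hx
    refine mul_le_mul_of_nonneg_left ?_ (by positivity)
    unfold wgt
    refine mul_le_of_le_one_right this (Real.exp_le_one_iff.2 ?_)
    have h3 : 0 < T + ε - t0 := by linarith
    rw [neg_div]
    have : 0 ≤ (x - ξ) ^ 2 / (4 * (T + ε - t0)) := by positivity
    linarith
  · intro t ht
    set c' := min ((c + T) / 2) (T + ε / 2)
    have hc1 : c' ≤ c := (min_le_left _ _).trans (by linarith)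
    have hc2 : c' < T + ε := (min_le_right _ _).trans_lt (by linarith)
    have hc3 : T < c' := lt_min (by linarith) (by linarith)
    exact core_id k ξ A B a c' C (T + ε) u ux ut uxx uxt z zt (S.mono hc1) hc2 t
      ⟨by linarith [ht.1], by linarith [ht.2]⟩ _ _ rfl rfl

lemma flat (A B ξ : ℝ) (hAB : A < B) (hξ : ξ ∈ Icc A B) (M : ℕ) : ∀ (g : ℝ → ℝ),
    ContDiffOn ℝ (⊤ : ℕ∞) g (Icc A B) →
    (∀ δ > 0, {x ∈ Icc A B | g x = 0 ∧ |x - ξ| < δ}.Infinite) →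
    ∃ C : ℝ, 0 ≤ C ∧ ∀ x ∈ Icc A B, |g x| ≤ C * |x - ξ| ^ M := by
  induction M with
  | zero =>
    intro g hg _
    obtain ⟨C, hC⟩ := isCompact_Icc.exists_bound_of_continuousOn hg.continuousOn
    refine ⟨C, (norm_nonneg _).trans (hC ξ hξ), fun x hx => ?_⟩
    simpa using hC x hx
  | succ M ih =>
    intro g hg hz
    have hu : UniqueDiffOn ℝ (Icc A B) := uniqueDiffOn_Icc hAB
    have hdiff : DifferentiableOn ℝ g (Icc A B) := hg.differentiableOn (by simp)
    have hg' : ContDiffOn ℝ (⊤ : ℕ∞) (derivWithin g (Icc A B)) (Icc A B) :=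
      hg.derivWithin hu (by simp)
    have hz' : ∀ δ > 0, {x ∈ Icc A B | derivWithin g (Icc A B) x = 0 ∧ |x - ξ| < δ}.Infinite := by
      intro δ hδ hfin
      -- between consecutive zeros there is a zero of the derivative
      have hs := hz δ hδ
      set S := {x ∈ Icc A B | g x = 0 ∧ |x - ξ| < δ}
      set D := {x ∈ Icc A B | derivWithin g (Icc A B) x = 0 ∧ |x - ξ| < δ}
      have rolle : ∀ x ∈ S, ∀ y ∈ S, x < y → ∃ w ∈ D, x < w ∧ w < y := by
        intro x hx y hy hxy
        obtain ⟨w, hw, hw0⟩ := exists_hasDerivAt_eq_zero (f := g) (f' := derivWithin g (Icc A B)) hxy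
          (hg.continuousOn.mono (Icc_subset_Icc hx.1.1 hy.1.2)) (by rw [hx.2.1, hy.2.1])
          (fun w hw => by
            have hw' : w ∈ Ioo A B := ⟨hx.1.1.trans_lt hw.1, hw.2.trans_le hy.1.2⟩
            exact ((hdiff w (Ioo_subset_Icc_self hw')).hasDerivWithinAt).hasDerivAt (Icc_mem_nhds hw'.1 hw'.2))
        refine ⟨w, ⟨⟨hx.1.1.trans hw.1.le, hw.2.le.trans hy.1.2⟩, hw0, ?_⟩, hw.1, hw.2⟩
        have a1 := abs_lt.1 hx.2.2
        have a2 := abs_lt.1 hy.2.2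
        exact abs_lt.2 ⟨by linarith [hw.1], by linarith [hw.2]⟩
      obtain ⟨F, hFS, hFc⟩ := hs.exists_subset_card_eq (hfin.toFinset.card + 2)
      let o := F.orderEmbOfFin hFc
      have ho : ∀ i, o i ∈ S := fun i => hFS (F.orderEmbOfFin_mem hFc i)
      have hr : ∀ i : Fin (hfin.toFinset.card + 1), ∃ w ∈ D, o i.castSucc < w ∧ w < o i.succ := fun i =>
        rolle _ (ho _) _ (ho _) (o.strictMono (Fin.castSucc_lt_succ))
      choose w hwD hw1 hw2 using hr
      have hinj : StrictMono w := by
        rw [Fin.strictMono_iff_lt_succ]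
        intro i
        have := hw2 i.castSucc
        have h2 := hw1 i.succ
        exact this.trans (by simpa using h2)
      have hcard := Finset.card_le_card (s := Finset.univ.image w) (t := hfin.toFinset) (by
        intro x hx
        simp only [Finset.mem_image, Finset.mem_univ, true_and] at hx
        obtain ⟨i, rfl⟩ := hx
        exact hfin.mem_toFinset.2 (hwD i))
      rw [Finset.card_image_of_injective _ hinj.injective] at hcard
      simp at hcard
    have gξ : g ξ = 0 := by
      by_contra hne
      have hc : ∀ᶠ x in nhdsWithin ξ (Icc A B), g x ≠ 0 :=
        (hg.continuousOn ξ hξ).eventually_ne hne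
      obtain ⟨δ, hδ, hball⟩ := Metric.mem_nhdsWithin_iff.1 hc
      obtain ⟨x, hx, hx0, hxδ⟩ := (hz δ hδ).nonempty
      exact hball ⟨by simpa [Real.dist_eq] using hxδ, hx⟩ hx0
    obtain ⟨C, hC0, hC⟩ := ih _ hg' hz'
    refine ⟨C, hC0, fun x hx => ?_⟩
    have hsub : uIcc ξ x ⊆ Icc A B := (convex_Icc A B).ordConnected.uIcc_subset hξ hx
    have := (convex_uIcc ξ x).norm_image_sub_le_of_norm_hasDerivWithin_le (f := g)
      (f' := derivWithin g (Icc A B)) (C := C * |x - ξ| ^ M)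
      (fun y hy => ((hdiff y (hsub hy)).hasDerivWithinAt).mono hsub)
      (fun y hy => by
        refine (hC y (hsub hy)).trans ?_
        have : |y - ξ| ≤ |x - ξ| := abs_sub_left_of_mem_uIcc hy
        gcongr) left_mem_uIcc right_mem_uIcc
    rw [gξ, sub_zero] at this
    rw [pow_succ, ← mul_assoc]
    exact this

lemma no_flat (k : ℕ) (ξ A B a c C : ℝ) (u ux ut uxx uxt z zt : ℝ → ℝ → ℝ)
    (S : FD k ξ A B a c C u ux ut uxx uxt z zt) (t0 T x0 : ℝ) (h0 : a < t0) (h1 : t0 < T)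
    (h2 : T < c) (hx0 : x0 ∈ Ioo A B) (hne : ∀ t ∈ Icc t0 T, u x0 t ≠ 0)
    (hflat : ∀ M : ℕ, ∃ C : ℝ, 0 ≤ C ∧ ∀ x ∈ Icc A B, |u x T| ≤ C * |x - ξ| ^ M) : False := by
  obtain ⟨c0, hc0, K, hK⟩ := freq k ξ A B a c C u ux ut uxx uxt z zt S t0 T x0 h0 h1 h2 hx0 hne
  obtain ⟨L, hL0, hL⟩ := hflat (K + 1)
  have hAB := S.hAB
  set W := (B - A) ^ k with hW
  have hWp : 0 < W := pow_pos (sub_pos.2 hAB) _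
  set Q := L ^ 2 * W * (4 ^ (K + 1) * ((K + 1).factorial : ℝ)) * (B - A) with hQ
  have hQ0 : 0 ≤ Q := by have := sub_pos.2 hAB; positivity
  have key : ∀ ε : ℝ, 0 < ε → ε ≤ 1 → c0 ≤ Q * ε := by
    intro ε hε hε1
    have h := hK ε hε hε1
    have hb : ‖∫ x in A..B, u x T ^ 2 * wgt k ξ (T + ε) x T‖
        ≤ (L ^ 2 * W * (4 ^ (K + 1) * ((K + 1).factorial : ℝ)) * ε ^ (K + 1)) * |B - A| := by
      refine intervalIntegral.norm_integral_le_of_norm_le_const fun x hx => ?_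
      rw [uIoc_of_le hAB.le] at hx
      have hx := Ioc_subset_Icc_self hx
      have e1 : u x T ^ 2 ≤ L ^ 2 * ((x - ξ) ^ 2) ^ (K + 1) := by
        have := pow_le_pow_left₀ (abs_nonneg _) (hL x hx) 2
        rw [sq_abs, mul_pow, ← pow_mul, mul_comm (K + 1) 2, pow_mul, sq_abs] at this
        exact this
      have e2 : |(x - ξ) ^ k| ≤ W := by
        rw [abs_pow]
        refine pow_le_pow_left₀ (abs_nonneg _) ?_ _
        rw [abs_le]
        constructor <;> linarith [S.hA, S.hB, hx.1, hx.2]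
      have e3 : ((x - ξ) ^ 2) ^ (K + 1) * Real.exp (-(x - ξ) ^ 2 / (4 * ε))
          ≤ 4 ^ (K + 1) * ((K + 1).factorial : ℝ) * ε ^ (K + 1) := by
        have f1 := Real.pow_div_factorial_le_exp ((x - ξ) ^ 2 / (4 * ε)) (by positivity) (K + 1)
        rw [neg_div, Real.exp_neg, ← div_eq_mul_inv, div_le_iff₀ (Real.exp_pos _)]
        rw [div_pow, div_div, div_le_iff₀ (by positivity)] at f1
        refine f1.trans (le_of_eq ?_)
        rw [mul_pow]; ring
      rw [Real.norm_eq_abs, abs_mul, abs_of_nonneg (sq_nonneg _)]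
      unfold wgt
      rw [abs_mul, abs_of_pos (Real.exp_pos _), add_sub_cancel_left]
      calc u x T ^ 2 * (|(x - ξ) ^ k| * Real.exp (-(x - ξ) ^ 2 / (4 * ε)))
          ≤ L ^ 2 * ((x - ξ) ^ 2) ^ (K + 1) * (W * Real.exp (-(x - ξ) ^ 2 / (4 * ε))) := by gcongr
        _ = L ^ 2 * W * (((x - ξ) ^ 2) ^ (K + 1) * Real.exp (-(x - ξ) ^ 2 / (4 * ε))) := by ring
        _ ≤ L ^ 2 * W * (4 ^ (K + 1) * ((K + 1).factorial : ℝ) * ε ^ (K + 1)) := by gcongr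
        _ = _ := by ring
    have h3 := h.trans ((le_abs_self _).trans hb)
    rw [abs_of_pos (sub_pos.2 hAB)] at h3
    have h4 : c0 * ε ^ K ≤ Q * ε * ε ^ K := by
      refine h3.trans (le_of_eq ?_)
      rw [hQ, pow_succ]; ring
    exact le_of_mul_le_mul_right h4 (by positivity)
  have := key (min 1 (c0 / (2 * (Q + 1)))) (by positivity) (min_le_left _ _)
  have h5 : Q * min 1 (c0 / (2 * (Q + 1))) ≤ Q * (c0 / (2 * (Q + 1))) := by
    gcongr; exact min_le_right _ _
  have h6 : Q * (c0 / (2 * (Q + 1))) < c0 := by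
    rw [mul_div_assoc', div_lt_iff₀ (by positivity)]
    nlinarith
  linarith


lemma cutoff1 (ρ : ℝ) (hρ : 0 < ρ) : ∃ φ φ1 φ2 : ℝ → ℝ,
    Continuous φ ∧ Continuous φ1 ∧ Continuous φ2 ∧ (∀ s, HasDerivAt φ (φ1 s) s) ∧
    (∀ s, HasDerivAt φ1 (φ2 s) s) ∧ φ 0 = 0 ∧ φ1 0 ≠ 0 ∧ (∀ s > 0, 0 < φ s) ∧
    ∀ s, ρ ≤ s → φ s = 1 ∧ φ1 s = 0 ∧ φ2 s = 0 := by
  -- a smooth step, zero up to ρ/2 and then one from ρ/2 + ρ/4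
  let σ : ℝ → ℝ := fun s => Real.smoothTransition (4 * (s - ρ / 2) / ρ)
  let φ : ℝ → ℝ := fun s => σ s + (1 - σ s) * s
  have hσ : ContDiff ℝ 2 σ := by
    refine Real.smoothTransition.contDiff.comp ?_
    fun_prop
  have hφ : ContDiff ℝ 2 φ := by
    refine hσ.add ((contDiff_const.sub hσ).mul contDiff_id)
  have h1 : ContDiff ℝ 1 (deriv φ) := by
    have := (contDiff_succ_iff_deriv (n := 1) (f := φ)).1 (by rw [one_add_one_eq_two]; exact hφ)
    exact this.2.2
  have hφd : ∀ s, HasDerivAt φ (deriv φ s) s := fun s => (hφ.differentiable (by simp) s).hasDerivAt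
  have hφdd : ∀ s, HasDerivAt (deriv φ) (deriv (deriv φ) s) s :=
    fun s => (h1.differentiable (by simp) s).hasDerivAt
  have one : ∀ s, 3 * ρ / 4 < s → φ s = 1 := by
    intro s hs
    have : σ s = 1 := Real.smoothTransition.one_of_one_le (by rw [le_div_iff₀ hρ]; linarith)
    simp [φ, this]
  have e1 : ∀ s, 3 * ρ / 4 < s → φ =ᶠ[nhds s] fun _ => 1 := fun s hs => by
    filter_upwards [isOpen_Ioi.mem_nhds hs] with y hy using one y hy
  have d1 : ∀ s, 3 * ρ / 4 < s → deriv φ s = 0 := fun s hs => by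
    rw [(e1 s hs).deriv_eq]; simp
  have d2 : ∀ s, 3 * ρ / 4 < s → deriv (deriv φ) s = 0 := fun s hs => by
    have : deriv φ =ᶠ[nhds s] fun _ => 0 := by
      filter_upwards [isOpen_Ioi.mem_nhds hs] with y hy using d1 y hy
    rw [this.deriv_eq]; simp
  have zero : ∀ s, s < ρ / 2 → φ s = s := by
    intro s hs
    have : σ s = 0 := Real.smoothTransition.zero_of_nonpos (by
      rw [div_nonpos_iff]; right; constructor <;> linarith)
    simp [φ, this]
  refine ⟨φ, deriv φ, deriv (deriv φ), hφ.continuous, h1.continuous, h1.continuous_deriv le_rfl, hφd, hφdd,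
    zero 0 (by positivity), ?_, ?_, ?_⟩
  · have : φ =ᶠ[nhds 0] fun s => s := by
      filter_upwards [isOpen_Iio.mem_nhds (by simpa using (half_pos hρ) : (0:ℝ) < ρ / 2)] with y hy using zero y hy
    rw [this.deriv_eq]; simp
  · intro s hs
    simp only [φ]
    have a1 : 0 ≤ σ s := Real.smoothTransition.nonneg _
    have a2 : σ s ≤ 1 := Real.smoothTransition.le_one _
    rcases a1.eq_or_lt with h | h
    · rw [← h]; simpa using hs
    · have : 0 ≤ (1 - σ s) * s := mul_nonneg (by linarith) hs.le
      linarith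
  · intro s hs
    have : 3 * ρ / 4 < s := by linarith
    exact ⟨one s this, d1 s this, d2 s this⟩

lemma cutoff1p (ρ : ℝ) (hρ : 0 < ρ) (p : Prop) : ∃ φ φ1 φ2 : ℝ → ℝ,
    Continuous φ ∧ Continuous φ1 ∧ Continuous φ2 ∧ (∀ s, HasDerivAt φ (φ1 s) s) ∧
    (∀ s, HasDerivAt φ1 (φ2 s) s) ∧ (p → φ 0 = 0) ∧ (φ 0 ≠ 0 ∨ φ1 0 ≠ 0) ∧ (∀ s > 0, 0 < φ s) ∧
    ∀ s, (p → ρ ≤ s) → φ s = 1 ∧ φ1 s = 0 ∧ φ2 s = 0 := by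
  by_cases hp : p
  · obtain ⟨φ, φ1, φ2, h1, h2, h3, h4, h5, h6, h7, h8, h9⟩ := cutoff1 ρ hρ
    exact ⟨φ, φ1, φ2, h1, h2, h3, h4, h5, fun _ => h6, Or.inr h7, h8, fun s h => h9 s (h hp)⟩
  · exact ⟨fun _ => 1, fun _ => 0, fun _ => 0, by fun_prop, by fun_prop, by fun_prop,
      fun s => hasDerivAt_const _ _, fun s => hasDerivAt_const _ _, fun h => absurd h hp,
      by simp, by simp, by simp⟩

lemma cutoff2 (A B ρ : ℝ) (hAB : A < B) (hρ : 0 < ρ) (pA pB : Prop) : ∃ η η1 η2 : ℝ → ℝ,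
    Continuous η ∧ Continuous η1 ∧ Continuous η2 ∧ (∀ s, HasDerivAt η (η1 s) s) ∧
    (∀ s, HasDerivAt η1 (η2 s) s) ∧ (pA → η A = 0) ∧ (pB → η B = 0) ∧
    (∀ x ∈ Icc A B, η x ≠ 0 ∨ η1 x ≠ 0) ∧ (∀ x ∈ Ioo A B, 0 < η x) ∧
    ∀ x, (pA → A + ρ ≤ x) → (pB → x ≤ B - ρ) → η x = 1 ∧ η1 x = 0 ∧ η2 x = 0 := by
  obtain ⟨φ, φ1, φ2, h1, h2, h3, h4, h5, h6, h7, h8, h9⟩ := cutoff1p ρ hρ pA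
  obtain ⟨ψ, ψ1, ψ2, g1, g2, g3, g4, g5, g6, g7, g8, g9⟩ := cutoff1p ρ hρ pB
  have dA : ∀ s, HasDerivAt (fun y => φ (y - A)) (φ1 (s - A)) s := fun s => by
    simpa using (h4 (s - A)).comp_sub_const s A
  have dA1 : ∀ s, HasDerivAt (fun y => φ1 (y - A)) (φ2 (s - A)) s := fun s => by
    simpa using (h5 (s - A)).comp_sub_const s A
  have dB : ∀ s, HasDerivAt (fun y => ψ (B - y)) (-ψ1 (B - s)) s := fun s => by
    simpa using (g4 (B - s)).comp_const_sub B s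
  have dB1 : ∀ s, HasDerivAt (fun y => -ψ1 (B - y)) (ψ2 (B - s)) s := fun s => by
    simpa using ((g5 (B - s)).comp_const_sub B s).fun_neg
  refine ⟨fun x => φ (x - A) * ψ (B - x), fun x => φ1 (x - A) * ψ (B - x) + φ (x - A) * (-ψ1 (B - x)),
    fun x => (φ2 (x - A) * ψ (B - x) + φ1 (x - A) * (-ψ1 (B - x))) + (φ1 (x - A) * (-ψ1 (B - x)) + φ (x - A) * ψ2 (B - x)),
    by fun_prop, by fun_prop, by fun_prop, fun s => (dA s).fun_mul (dB s),
    fun s => ((dA1 s).fun_mul (dB s)).fun_add ((dA s).fun_mul (dB1 s)), ?_, ?_, ?_, ?_, ?_⟩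
  · intro h; simp [h6 h]
  · intro h; simp [g6 h]
  · intro x hx
    rcases hx.1.eq_or_lt with h | h
    · subst h
      have hp := g8 (B - A) (sub_pos.2 hAB)
      by_cases h0 : φ 0 = 0
      · right
        have := h7.resolve_left (by simpa using h0)
        simp [h0, this, hp.ne']
      · left; simp [h0, hp.ne']
    · rcases hx.2.eq_or_lt with h' | h'
      · subst h'
        have hp := h8 (x - A) (sub_pos.2 hAB)
        by_cases h0 : ψ 0 = 0
        · right
          have := g7.resolve_left (by simpa using h0)
          simp [h0, this, hp.ne']
        · left; simp [h0, hp.ne']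
      · left
        exact (mul_pos (h8 _ (sub_pos.2 h)) (g8 _ (sub_pos.2 h'))).ne'
  · intro x hx
    exact mul_pos (h8 _ (sub_pos.2 hx.1)) (g8 _ (sub_pos.2 hx.2))
  · intro x hA hB
    obtain ⟨a1, a2, a3⟩ := h9 (x - A) (fun h => by linarith [hA h])
    obtain ⟨b1, b2, b3⟩ := g9 (B - x) (fun h => by linarith [hB h])
    simp [a1, a2, a3, b1, b2, b3]

lemma hadamard (B a c : ℝ) (hB : 0 < B) (hac : a ≤ c) (v vx : ℝ → ℝ → ℝ)
    (hv : ContinuousOn (fun p : ℝ × ℝ => v p.1 p.2) (Icc 0 B ×ˢ Icc a c))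
    (hvx : ContinuousOn (fun p : ℝ × ℝ => vx p.1 p.2) (Icc 0 B ×ˢ Icc a c))
    (hd : ∀ x ∈ Ioo 0 B, ∀ t ∈ Icc a c, HasDerivAt (fun y => v y t) (vx x t) x)
    (h0 : ∀ t ∈ Icc a c, v 0 t = 0) :
    ∃ z : ℝ → ℝ → ℝ, ContinuousOn (fun p : ℝ × ℝ => z p.1 p.2) (Icc 0 B ×ˢ Icc a c) ∧
      ∀ x ∈ Icc 0 B, ∀ t ∈ Icc a c, z x t * x = v x t := by
  let V : ℝ → ℝ → ℝ := fun y t => vx (max 0 (min B y)) (max a (min c t))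
  have hV : Continuous (fun p : ℝ × ℝ => V p.1 p.2) := by
    refine hvx.comp_continuous (f := fun p : ℝ × ℝ => (max 0 (min B p.1), max a (min c p.2))) (by fun_prop) ?_
    intro p
    exact ⟨⟨le_max_left _ _, max_le hB.le (min_le_left _ _)⟩,
      ⟨le_max_left _ _, max_le hac (min_le_left _ _)⟩⟩
  have hVe : ∀ x ∈ Icc 0 B, ∀ t ∈ Icc a c, V x t = vx x t := by
    intro x hx t ht
    simp only [V]
    rw [min_eq_right hx.2, max_eq_right hx.1, min_eq_right ht.2, max_eq_right ht.1]
  refine ⟨fun x t => ∫ s in (0:ℝ)..1, V (x * s) t, ?_, ?_⟩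
  · refine Continuous.continuousOn ?_
    refine intervalIntegral.continuous_parametric_intervalIntegral_of_continuous'
      (f := fun (p : ℝ × ℝ) (s : ℝ) => V (p.1 * s) p.2) ?_ 0 1
    exact hV.comp (f := fun q : (ℝ × ℝ) × ℝ => (q.1.1 * q.2, q.1.2)) (by fun_prop)
  · intro x hx t ht
    rw [mul_comm, intervalIntegral.mul_integral_comp_mul_left (f := fun y => V y t)]
    simp only [mul_zero, mul_one]
    have : ∫ y in (0:ℝ)..x, V y t = v x t - v 0 t := by
      refine intervalIntegral.integral_eq_sub_of_hasDerivAt_of_le hx.1 (f := fun y => v y t) ?_ ?_ ?_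
      · exact hv.comp (f := fun y : ℝ => (y, t)) (by fun_prop) (fun y hy => ⟨⟨hy.1, hy.2.trans hx.2⟩, ht⟩)
      · intro y hy
        rw [hVe y ⟨hy.1.le, hy.2.le.trans hx.2⟩ t ht]
        exact hd y ⟨hy.1, hy.2.trans_le hx.2⟩ t ht
      · exact (hV.comp (f := fun y : ℝ => (y, t)) (by fun_prop)).intervalIntegrable _ _
    rw [this, h0 t ht, sub_zero]


lemma nbhd_ne (A B a c y T : ℝ) (v : ℝ → ℝ → ℝ) (p : Prop)
    (hv : ContinuousOn (fun p : ℝ × ℝ => v p.1 p.2) (Icc A B ×ˢ Icc a c))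
    (hy : y ∈ Icc A B) (hT : T ∈ Icc a c) (hne : p → v y T ≠ 0) :
    ∃ δ > 0, p → ∀ x ∈ Icc A B, ∀ t ∈ Icc a c, |x - y| ≤ δ → |t - T| ≤ δ → v x t ≠ 0 := by
  by_cases hp : p
  · have hc := (hv (y, T) ⟨hy, hT⟩).eventually_ne (hne hp)
    obtain ⟨δ, hδ, hb⟩ := Metric.mem_nhdsWithin_iff.1 hc
    refine ⟨δ / 2, by positivity, fun _ x hx t ht h1 h2 => ?_⟩
    refine hb (a := (x, t)) ⟨?_, hx, ht⟩
    rw [Metric.mem_ball, Prod.dist_eq, max_lt_iff, Real.dist_eq, Real.dist_eq]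
    constructor <;> simp only <;> linarith
  · exact ⟨1, one_pos, fun h => absurd h hp⟩

lemma build (k : ℕ) (ξ A B a c C0 : ℝ) (v vx vt vxx vxt z zt : ℝ → ℝ → ℝ) (η η1 η2 : ℝ → ℝ)
    (Kx : Set ℝ) (hKc : IsCompact Kx) (hKs : Kx ⊆ Icc A B)
    (hAB : A < B) (hA : A ≤ ξ) (hB : ξ ≤ B) (hk : k = 0 ∨ A = ξ) (hC0 : 0 ≤ C0)
    (cv : ContinuousOn (fun p : ℝ × ℝ => v p.1 p.2) (Icc A B ×ˢ Icc a c))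
    (cvx : ContinuousOn (fun p : ℝ × ℝ => vx p.1 p.2) (Icc A B ×ˢ Icc a c))
    (cvt : ContinuousOn (fun p : ℝ × ℝ => vt p.1 p.2) (Icc A B ×ˢ Icc a c))
    (cvxx : ContinuousOn (fun p : ℝ × ℝ => vxx p.1 p.2) (Icc A B ×ˢ Icc a c))
    (cvxt : ContinuousOn (fun p : ℝ × ℝ => vxt p.1 p.2) (Icc A B ×ˢ Icc a c))
    (cz : ContinuousOn (fun p : ℝ × ℝ => z p.1 p.2) (Icc A B ×ˢ Icc a c))
    (czt : ContinuousOn (fun p : ℝ × ℝ => zt p.1 p.2) (Icc A B ×ˢ Icc a c))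
    (dvx : ∀ x ∈ Ioo A B, ∀ t ∈ Ioo a c, HasDerivAt (fun y => v y t) (vx x t) x)
    (dvxx : ∀ x ∈ Ioo A B, ∀ t ∈ Ioo a c, HasDerivAt (fun y => vx y t) (vxx x t) x)
    (dvtx : ∀ x ∈ Ioo A B, ∀ t ∈ Ioo a c, HasDerivAt (fun y => vt y t) (vxt x t) x)
    (dvt : ∀ x ∈ Ioo A B, ∀ t ∈ Ioo a c, HasDerivAt (fun s => v x s) (vt x t) t)
    (dvxt : ∀ x ∈ Ioo A B, ∀ t ∈ Ioo a c, HasDerivAt (fun s => vx x s) (vxt x t) t)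
    (dzt : ∀ x ∈ Ioo A B, ∀ t ∈ Ioo a c, HasDerivAt (fun s => z x s) (zt x t) t)
    (dzx : ∀ x ∈ Ioo A B, ∀ t ∈ Ioo a c,
      HasDerivAt (fun y => (k : ℝ) * z y t) (k * ((vx x t - z x t) / (x - ξ))) x)
    (hz : ∀ x ∈ Icc A B, ∀ t ∈ Ioo a c, (k : ℝ) * (z x t * (x - ξ)) = k * v x t)
    (hzt : ∀ x ∈ Icc A B, ∀ t ∈ Ioo a c, (k : ℝ) * (zt x t * (x - ξ)) = k * vt x t)
    (ineq : ∀ x ∈ Ioo A B, ∀ t ∈ Ioo a c,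
      (vt x t - vxx x t - k / (x - ξ) * vx x t + k * z x t / (x - ξ)) ^ 2
        ≤ C0 * (v x t ^ 2 + vx x t ^ 2 + k * z x t ^ 2))
    (cη : Continuous η) (cη1 : Continuous η1) (cη2 : Continuous η2)
    (dη : ∀ s, HasDerivAt η (η1 s) s) (dη1 : ∀ s, HasDerivAt η1 (η2 s) s)
    (bA : η A = 0 ∨ ∀ t ∈ Ioo a c, v A t = 0 ∧ vt A t = 0)
    (bB : η B = 0 ∨ ∀ t ∈ Ioo a c, v B t = 0 ∧ vt B t = 0)
    (hη : ∀ x ∈ Icc A B, η x ≠ 0 ∨ η1 x ≠ 0)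
    (hK : ∀ x ∈ Icc A B, x ∉ Kx → η x = 1 ∧ η1 x = 0 ∧ η2 x = 0)
    (hvK : ∀ x ∈ Kx, ∀ t ∈ Icc a c, v x t ≠ 0) :
    ∃ C : ℝ, FD k ξ A B a c C (fun x t => η x * v x t) (fun x t => η1 x * v x t + η x * vx x t)
      (fun x t => η x * vt x t)
      (fun x t => (η2 x * v x t + η1 x * vx x t) + (η1 x * vx x t + η x * vxx x t))
      (fun x t => η1 x * vt x t + η x * vxt x t)
      (fun x t => η x * z x t) (fun x t => η x * zt x t) := by
  have e0 : ContinuousOn (fun p : ℝ × ℝ => η p.1) (Icc A B ×ˢ Icc a c) := by fun_prop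
  have e1 : ContinuousOn (fun p : ℝ × ℝ => η1 p.1) (Icc A B ×ˢ Icc a c) := by fun_prop
  have e2 : ContinuousOn (fun p : ℝ × ℝ => η2 p.1) (Icc A B ×ˢ Icc a c) := by fun_prop
  have hxk : ∀ x ∈ Ioo A B, (k : ℝ) = 0 ∨ x - ξ ≠ 0 := by
    intro x hx
    rcases hk with h | h
    · left; simp [h]
    · right; rw [← h]; exact (sub_pos.2 hx.1).ne'
  have cpt : IsCompact (Icc A B ×ˢ Icc a c) := isCompact_Icc.prod isCompact_Icc
  obtain ⟨M, hM⟩ := cpt.exists_bound_of_continuousOn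
    (f := fun p : ℝ × ℝ => 2 * (η p.1 ^ 2 * (C0 * (v p.1 p.2 ^ 2 + vx p.1 p.2 ^ 2 + k * z p.1 p.2 ^ 2)))
      + 2 * (η2 p.1 * v p.1 p.2 + 2 * (η1 p.1 * vx p.1 p.2) + k * (η1 p.1 * z p.1 p.2)) ^ 2)
    (by fun_prop)
  have cptK : IsCompact (Kx ×ˢ Icc a c) := hKc.prod isCompact_Icc
  have hsub : Kx ×ˢ Icc a c ⊆ Icc A B ×ˢ Icc a c := prod_mono hKs le_rfl
  obtain ⟨κ, hκ, hκ'⟩ := cptK.exists_forall_le' (a := 0)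
    (f := fun p : ℝ × ℝ => (η p.1 * v p.1 p.2) ^ 2 + (η1 p.1 * v p.1 p.2 + η p.1 * vx p.1 p.2) ^ 2)
    (ContinuousOn.mono (by fun_prop) hsub) (by
      rintro ⟨x, t⟩ ⟨hx, ht⟩
      have hv := hvK x hx t ht
      simp only
      by_cases h : η x = 0
      · have := (hη x (hKs hx)).resolve_left (by simpa using h)
        simp only [h]
        simp
        positivity
      · positivity)
  have M0 : 0 ≤ |M| := abs_nonneg M
  refine ⟨C0 + |M| / κ, ?_⟩
  exact
  { hAB := hAB, hA := hA, hB := hB, hk := hk, hC := by positivity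
    cu := e0.mul cv, cux := (e1.mul cv).add (e0.mul cvx), cut := e0.mul cvt
    cuxx := ((e2.mul cv).add (e1.mul cvx)).add ((e1.mul cvx).add (e0.mul cvxx))
    cuxt := (e1.mul cvt).add (e0.mul cvxt)
    cz := e0.mul cz, czt := e0.mul czt
    dux := fun x hx t ht => (dη x).fun_mul (dvx x hx t ht)
    duxx := fun x hx t ht => ((dη1 x).fun_mul (dvx x hx t ht)).fun_add ((dη x).fun_mul (dvxx x hx t ht))
    dutx := fun x hx t ht => (dη x).fun_mul (dvtx x hx t ht)
    dut := fun x hx t ht => (dvt x hx t ht).const_mul _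
    duxt := fun x hx t ht => ((dvt x hx t ht).const_mul _).fun_add ((dvxt x hx t ht).const_mul _)
    dzt := fun x hx t ht => (dzt x hx t ht).const_mul _
    dzx := fun x hx t ht => by
      have h := (dη x).fun_mul (dzx x hx t ht)
      have e : (fun y => (k : ℝ) * (η y * z y t)) = fun y => η y * (k * z y t) := by
        funext y; ring
      rw [e]
      refine h.congr_deriv ?_
      rcases hxk x hx with h0 | h0
      · simp [h0]
      · have hzx := hz x (Ioo_subset_Icc_self hx) t ht
        field_simp
        linear_combination (η1 x) * hzx
    hz := fun x hx t ht => by linear_combination (η x) * hz x hx t ht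
    hzt := fun x hx t ht => by linear_combination (η x) * hzt x hx t ht
    uA := fun t ht => by
      rcases bA with h | h
      · simp [h]
      · simp [(h t ht).1]
    uB := fun t ht => by
      rcases bB with h | h
      · simp [h]
      · simp [(h t ht).1]
    utA := fun t ht => by
      rcases bA with h | h
      · simp [h]
      · simp [(h t ht).2]
    utB := fun t ht => by
      rcases bB with h | h
      · simp [h]
      · simp [(h t ht).2]
    ineq := fun x hx t ht => by
      have hx' := Ioo_subset_Icc_self hx
      have ht' := Ioo_subset_Icc_self ht
      have hi := ineq x hx t ht
      set f := vt x t - vxx x t - k / (x - ξ) * vx x t + k * z x t / (x - ξ) with hf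
      by_cases hxK : x ∈ Kx
      · have heq : η x * vt x t - (η2 x * v x t + η1 x * vx x t + (η1 x * vx x t + η x * vxx x t))
            - k / (x - ξ) * (η1 x * v x t + η x * vx x t) + k * (η x * z x t) / (x - ξ)
            = η x * f - (η2 x * v x t + 2 * (η1 x * vx x t) + k * (η1 x * z x t)) := by
          have hzx := hz x hx' t ht
          rcases hxk x hx with h0 | h0
          · simp only [hf, h0]; simp; ring
          · have : (k : ℝ) * z x t = k * v x t / (x - ξ) := by
              rw [← hzx]; field_simp
            have h3 : (k : ℝ) * (η1 x * z x t) = k * v x t / (x - ξ) * η1 x := by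
              rw [← this]; ring
            rw [h3, hf]
            field_simp
            ring
        rw [heq]
        have b1 := hM (x, t) ⟨hx', ht'⟩
        have b2 := hκ' (x, t) ⟨hxK, ht'⟩
        simp only at b1 b2
        set g := η2 x * v x t + 2 * (η1 x * vx x t) + k * (η1 x * z x t)
        set Q := C0 * (v x t ^ 2 + vx x t ^ 2 + k * z x t ^ 2)
        have c1 : (η x * f - g) ^ 2 ≤ 2 * (η x ^ 2 * Q) + 2 * g ^ 2 := by
          have : η x ^ 2 * f ^ 2 ≤ η x ^ 2 * Q := by gcongr
          nlinarith [sq_nonneg (η x * f + g)]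
        have c2 : 2 * (η x ^ 2 * Q) + 2 * g ^ 2 ≤ |M| := (le_abs_self _).trans (b1.trans (le_abs_self _))
        have c3 : |M| ≤ |M| / κ * ((η x * v x t) ^ 2 + (η1 x * v x t + η x * vx x t) ^ 2) := by
          calc |M| = |M| / κ * κ := by field_simp
            _ ≤ _ := by gcongr
        have c4 : 0 ≤ (k : ℝ) * (η x * z x t) ^ 2 := by positivity
        have c5 : 0 ≤ |M| / κ * (k * (η x * z x t) ^ 2) := by positivity
        have c6 : 0 ≤ C0 * ((η x * v x t) ^ 2 + (η1 x * v x t + η x * vx x t) ^ 2 + k * (η x * z x t) ^ 2) := by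
          positivity
        linarith
      · obtain ⟨h1, h2, h3⟩ := hK x hx' hxK
        simp only [h1, h2, h3, one_mul, zero_mul, zero_add]
        refine hi.trans ?_
        gcongr
        have : 0 ≤ |M| / κ := by positivity
        linarith }

lemma accum (k : ℕ) (ξ A B a c C0 T x0 : ℝ) (v vx vt vxx vxt z zt : ℝ → ℝ → ℝ) (pA pB : Prop)
    (hAB : A < B) (hA : A ≤ ξ) (hB : ξ ≤ B) (hk : k = 0 ∨ A = ξ) (hC0 : 0 ≤ C0)
    (cv : ContinuousOn (fun p : ℝ × ℝ => v p.1 p.2) (Icc A B ×ˢ Icc a c))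
    (cvx : ContinuousOn (fun p : ℝ × ℝ => vx p.1 p.2) (Icc A B ×ˢ Icc a c))
    (cvt : ContinuousOn (fun p : ℝ × ℝ => vt p.1 p.2) (Icc A B ×ˢ Icc a c))
    (cvxx : ContinuousOn (fun p : ℝ × ℝ => vxx p.1 p.2) (Icc A B ×ˢ Icc a c))
    (cvxt : ContinuousOn (fun p : ℝ × ℝ => vxt p.1 p.2) (Icc A B ×ˢ Icc a c))
    (cz : ContinuousOn (fun p : ℝ × ℝ => z p.1 p.2) (Icc A B ×ˢ Icc a c))
    (czt : ContinuousOn (fun p : ℝ × ℝ => zt p.1 p.2) (Icc A B ×ˢ Icc a c))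
    (dvx : ∀ x ∈ Ioo A B, ∀ t ∈ Ioo a c, HasDerivAt (fun y => v y t) (vx x t) x)
    (dvxx : ∀ x ∈ Ioo A B, ∀ t ∈ Ioo a c, HasDerivAt (fun y => vx y t) (vxx x t) x)
    (dvtx : ∀ x ∈ Ioo A B, ∀ t ∈ Ioo a c, HasDerivAt (fun y => vt y t) (vxt x t) x)
    (dvt : ∀ x ∈ Ioo A B, ∀ t ∈ Ioo a c, HasDerivAt (fun s => v x s) (vt x t) t)
    (dvxt : ∀ x ∈ Ioo A B, ∀ t ∈ Ioo a c, HasDerivAt (fun s => vx x s) (vxt x t) t)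
    (dzt : ∀ x ∈ Ioo A B, ∀ t ∈ Ioo a c, HasDerivAt (fun s => z x s) (zt x t) t)
    (dzx : ∀ x ∈ Ioo A B, ∀ t ∈ Ioo a c,
      HasDerivAt (fun y => (k : ℝ) * z y t) (k * ((vx x t - z x t) / (x - ξ))) x)
    (hz : ∀ x ∈ Icc A B, ∀ t ∈ Ioo a c, (k : ℝ) * (z x t * (x - ξ)) = k * v x t)
    (hzt : ∀ x ∈ Icc A B, ∀ t ∈ Ioo a c, (k : ℝ) * (zt x t * (x - ξ)) = k * vt x t)
    (ineq : ∀ x ∈ Ioo A B, ∀ t ∈ Ioo a c,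
      (vt x t - vxx x t - k / (x - ξ) * vx x t + k * z x t / (x - ξ)) ^ 2
        ≤ C0 * (v x t ^ 2 + vx x t ^ 2 + k * z x t ^ 2))
    (hT : T ∈ Ioo a c) (hpA : pA → v A T ≠ 0) (hpB : pB → v B T ≠ 0)
    (bA : pA ∨ ∀ t ∈ Ioo a c, v A t = 0 ∧ vt A t = 0)
    (bB : pB ∨ ∀ t ∈ Ioo a c, v B t = 0 ∧ vt B t = 0)
    (hx0 : x0 ∈ Ioo A B) (hvx0 : v x0 T ≠ 0)
    (hflat : ∀ M : ℕ, ∃ C : ℝ, 0 ≤ C ∧ ∀ x ∈ Icc A B, |v x T| ≤ C * |x - ξ| ^ M) : False := by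
  have hT' := Ioo_subset_Icc_self hT
  obtain ⟨δ1, p1, n1⟩ := nbhd_ne A B a c A T v pA cv ⟨le_rfl, hAB.le⟩ hT' hpA
  obtain ⟨δ2, p2, n2⟩ := nbhd_ne A B a c B T v pB cv ⟨hAB.le, le_rfl⟩ hT' hpB
  obtain ⟨δ3, p3, n3⟩ := nbhd_ne A B a c x0 T v True cv (Ioo_subset_Icc_self hx0) hT' (fun _ => hvx0)
  obtain ⟨δ, hδ, l1, l2, l3, l4, l5⟩ : ∃ δ > 0, δ ≤ δ1 ∧ δ ≤ δ2 ∧ δ ≤ δ3 ∧ δ < T - a ∧ δ < c - T := by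
    have q1 : 0 < T - a := sub_pos.2 hT.1
    have q2 : 0 < c - T := sub_pos.2 hT.2
    obtain ⟨δ, h, h'⟩ := exists_between (lt_min p1 (lt_min p2 (lt_min p3 (lt_min q1 q2))))
    simp only [lt_min_iff] at h'
    exact ⟨δ, h, h'.1.le, h'.2.1.le, h'.2.2.1.le, h'.2.2.2.1, h'.2.2.2.2⟩
  set a' := T - δ with ha'
  set c' := T + δ with hc'
  have ho : ∀ t, t ∈ Ioo a' c' → t ∈ Ioo a c := fun t h => ⟨by linarith [h.1], by linarith [h.2]⟩
  have hi : ∀ t, t ∈ Icc a' c' → t ∈ Icc a c := fun t h => ⟨by linarith [h.1], by linarith [h.2]⟩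
  have hs : Icc A B ×ˢ Icc a' c' ⊆ Icc A B ×ˢ Icc a c := prod_mono le_rfl hi
  obtain ⟨η, η1, η2, cη, cη1, cη2, dη, dη1, zA, zB, hη, hηpos, hone⟩ := cutoff2 A B δ hAB hδ pA pB
  obtain ⟨C, S⟩ := build k ξ A B a' c' C0 v vx vt vxx vxt z zt η η1 η2
    (Icc A B ∩ ({x | pA ∧ x ≤ A + δ} ∪ {x | pB ∧ B - δ ≤ x}))
    (by
      refine isCompact_Icc.inter_right ?_
      refine IsClosed.union ?_ ?_
      · by_cases h : pA <;> simp [h, isClosed_Iic, Set.Iic_def]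
      · by_cases h : pB
        · simp only [h, true_and]; exact isClosed_Ici
        · simp [h]) inter_subset_left
    hAB hA hB hk hC0 (cv.mono hs) (cvx.mono hs) (cvt.mono hs) (cvxx.mono hs) (cvxt.mono hs)
    (cz.mono hs) (czt.mono hs)
    (fun x hx t ht => dvx x hx t (ho t ht)) (fun x hx t ht => dvxx x hx t (ho t ht))
    (fun x hx t ht => dvtx x hx t (ho t ht)) (fun x hx t ht => dvt x hx t (ho t ht))
    (fun x hx t ht => dvxt x hx t (ho t ht)) (fun x hx t ht => dzt x hx t (ho t ht))
    (fun x hx t ht => dzx x hx t (ho t ht)) (fun x hx t ht => hz x hx t (ho t ht))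
    (fun x hx t ht => hzt x hx t (ho t ht)) (fun x hx t ht => ineq x hx t (ho t ht))
    cη cη1 cη2 dη dη1
    (bA.imp zA fun h t ht => h t (ho t ht)) (bB.imp zB fun h t ht => h t (ho t ht)) hη
    (by
      intro x hx hxK
      refine hone x (fun h => ?_) (fun h => ?_)
      · by_contra hlt
        exact hxK ⟨hx, Or.inl ⟨h, (not_le.1 hlt).le⟩⟩
      · by_contra hlt
        exact hxK ⟨hx, Or.inr ⟨h, (not_le.1 hlt).le⟩⟩)
    (by
      rintro x ⟨hx, hh⟩ t ht
      have htT : |t - T| ≤ δ := abs_le.2 ⟨by linarith [ht.1], by linarith [ht.2]⟩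
      rcases hh with ⟨h, h'⟩ | ⟨h, h'⟩
      · exact n1 h x hx t (hi t ht) (abs_le.2 ⟨by linarith [hx.1], by linarith⟩) (htT.trans l1)
      · exact n2 h x hx t (hi t ht) (abs_le.2 ⟨by linarith, by linarith [hx.2]⟩) (htT.trans l2))
  refine no_flat k ξ A B a' c' C _ _ _ _ _ _ _ S (T - δ / 2) T x0 (by linarith) (by linarith) (by linarith)
    hx0 ?_ ?_
  · intro t ht
    refine mul_ne_zero (hηpos x0 hx0).ne' (n3 trivial x0 (Ioo_subset_Icc_self hx0) t
      (hi t ⟨by linarith [ht.1], by linarith [ht.2]⟩) (by simpa using p3.le) ?_)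
    exact (abs_le.2 ⟨by linarith [ht.1], by linarith [ht.2]⟩ : |t - T| ≤ δ).trans l3
  · intro M
    obtain ⟨L, hL0, hL⟩ := hflat M
    obtain ⟨L', hL'⟩ := (isCompact_Icc (a := A) (b := B)).exists_bound_of_continuousOn cη.continuousOn
    have hL'0 : 0 ≤ L' := (norm_nonneg _).trans (hL' A ⟨le_rfl, hAB.le⟩)
    refine ⟨L' * L, by positivity, fun x hx => ?_⟩
    rw [abs_mul, mul_assoc]
    exact mul_le_mul (hL' x hx) (hL x hx) (abs_nonneg _) hL'0


structure VD (m : ℕ) (R t1 t2 : ℝ) (b v vx vt vxx vxt : ℝ → ℝ → ℝ) : Prop where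
  hm : 2 ≤ m
  hR : 0 < R
  hb : ContDiffOn ℝ (⊤ : ℕ∞) (fun p : ℝ × ℝ => b p.1 p.2) (Icc 0 R ×ˢ Ioo t1 t2)
  hb0 : ∀ t ∈ Ioo t1 t2, b 0 t = (m : ℝ) - 1
  hv : ContDiffOn ℝ (⊤ : ℕ∞) (fun p : ℝ × ℝ => v p.1 p.2) (Icc 0 R ×ˢ Ioo t1 t2)
  hv0 : ∀ t ∈ Ioo t1 t2, v 0 t = 0
  cvx : ContinuousOn (fun p : ℝ × ℝ => vx p.1 p.2) (Icc 0 R ×ˢ Ioo t1 t2)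
  cvt : ContinuousOn (fun p : ℝ × ℝ => vt p.1 p.2) (Icc 0 R ×ˢ Ioo t1 t2)
  cvxx : ContinuousOn (fun p : ℝ × ℝ => vxx p.1 p.2) (Icc 0 R ×ˢ Ioo t1 t2)
  cvxt : ContinuousOn (fun p : ℝ × ℝ => vxt p.1 p.2) (Icc 0 R ×ˢ Ioo t1 t2)
  dvx : ∀ x ∈ Ioo 0 R, ∀ t ∈ Ioo t1 t2, HasDerivAt (fun y => v y t) (vx x t) x
  dvxx : ∀ x ∈ Ioo 0 R, ∀ t ∈ Ioo t1 t2, HasDerivAt (fun y => vx y t) (vxx x t) x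
  dvtx : ∀ x ∈ Ioo 0 R, ∀ t ∈ Ioo t1 t2, HasDerivAt (fun y => vt y t) (vxt x t) x
  dvt : ∀ x ∈ Icc 0 R, ∀ t ∈ Ioo t1 t2, HasDerivAt (fun s => v x s) (vt x t) t
  dvxt : ∀ x ∈ Icc 0 R, ∀ t ∈ Ioo t1 t2, HasDerivAt (fun s => vx x s) (vxt x t) t
  pde : ∀ x ∈ Ioo 0 R, ∀ t ∈ Ioo t1 t2,
    vt x t = vxx x t + (((m : ℝ) - 1) / x) * vx x t - (b x t / x ^ 2) * v x t

lemma zero_dt (t1 t2 x : ℝ) (v vt : ℝ → ℝ → ℝ)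
    (hd : ∀ t ∈ Ioo t1 t2, HasDerivAt (fun s => v x s) (vt x t) t)
    (h0 : ∀ t ∈ Ioo t1 t2, v x t = 0) : ∀ t ∈ Ioo t1 t2, vt x t = 0 := by
  intro t ht
  have : (fun s => v x s) =ᶠ[nhds t] fun _ => 0 := by
    filter_upwards [isOpen_Ioo.mem_nhds ht] with s hs using h0 s hs
  exact ((hd t ht).congr_of_eventuallyEq this.symm).unique (hasDerivAt_const t 0)

lemma slice_smooth (R t1 t2 A B T : ℝ) (hA : 0 ≤ A) (hB : B ≤ R) (hT : T ∈ Ioo t1 t2) (v : ℝ → ℝ → ℝ)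
    (hv : ContDiffOn ℝ (⊤ : ℕ∞) (fun p : ℝ × ℝ => v p.1 p.2) (Icc 0 R ×ˢ Ioo t1 t2)) :
    ContDiffOn ℝ (⊤ : ℕ∞) (fun x => v x T) (Icc A B) := by
  have : ContDiff ℝ (⊤ : ℕ∞) (fun x : ℝ => (x, T)) := by fun_prop
  exact hv.comp (f := fun x : ℝ => (x, T)) this.contDiffOn
    (fun x hx => ⟨⟨hA.trans hx.1, hx.2.trans hB⟩, hT⟩)

lemma accum_pt (A B : ℝ) (g : ℝ → ℝ) (h : {x ∈ Icc A B | g x = 0}.Infinite) :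
    ∃ ξ ∈ Icc A B, ∀ δ > 0, {x ∈ Icc A B | g x = 0 ∧ |x - ξ| < δ}.Infinite := by
  obtain ⟨ξ, hξ, hacc⟩ := h.exists_accPt_of_subset_isCompact (K := Icc A B) isCompact_Icc (fun x hx => hx.1)
  refine ⟨ξ, hξ, fun δ hδ => ?_⟩
  have h2 := hacc.nhds_inter (Metric.ball_mem_nhds ξ hδ)
  refine (Set.Infinite.of_accPt h2).mono ?_
  rintro x ⟨h3, h4, h5⟩
  exact ⟨h4, h5, by simpa [Real.dist_eq] using h3⟩

lemma fin_k0 (m : ℕ) (R t1 t2 : ℝ) (b v vx vt vxx vxt : ℝ → ℝ → ℝ)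
    (D : VD m R t1 t2 b v vx vt vxx vxt) (T A : ℝ) (hT : T ∈ Ioo t1 t2) (hA : A ∈ Ioo 0 R)
    (hvA : v A T ≠ 0) (hbR : (∀ t ∈ Ioo t1 t2, v R t = 0) ∨ v R T ≠ 0) :
    {x ∈ Icc A R | v x T = 0}.Finite := by
  by_contra hinf
  obtain ⟨ξ, hξ, hacc⟩ := accum_pt A R (fun x => v x T) hinf
  have hfl := fun M => flat A R ξ hA.2 hξ M (fun x => v x T)
    (slice_smooth R t1 t2 A R T hA.1.le le_rfl hT v D.hv) hacc
  obtain ⟨a, ha1, ha2⟩ := exists_between hT.1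
  obtain ⟨c, hc1, hc2⟩ := exists_between hT.2
  have hs : Icc A R ×ˢ Icc a c ⊆ Icc 0 R ×ˢ Ioo t1 t2 :=
    prod_mono (Icc_subset_Icc_left hA.1.le) (fun t ht => ⟨ha1.trans_le ht.1, ht.2.trans_lt hc2⟩)
  have cv := D.hv.continuousOn.mono hs
  have ho : ∀ t, t ∈ Ioo a c → t ∈ Ioo t1 t2 := fun t ht => ⟨ha1.trans ht.1, ht.2.trans hc2⟩
  have hx' : ∀ x, x ∈ Ioo A R → x ∈ Ioo 0 R := fun x hx => ⟨hA.1.trans hx.1, hx.2⟩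
  obtain ⟨Cb, hCb⟩ := ((isCompact_Icc (a := A) (b := R)).prod (isCompact_Icc (a := a) (b := c))).exists_bound_of_continuousOn
    (D.hb.continuousOn.mono hs)
  have hTac : T ∈ Icc a c := ⟨ha2.le, hc1.le⟩
  obtain ⟨δ, hδ, hn⟩ := nbhd_ne A R a c A T v True cv ⟨le_rfl, hA.2.le⟩ hTac (fun _ => hvA)
  obtain ⟨x0, hx1, hx2⟩ := exists_between (lt_min (lt_add_of_pos_right A hδ) hA.2)
  have hx3 := lt_min_iff.1 hx2
  have hvx0 : v x0 T ≠ 0 := hn trivial x0 ⟨hx1.le, hx3.2.le⟩ T hTac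
    (abs_le.2 ⟨by linarith, by linarith⟩) (by simpa using hδ.le)
  have hk : ∀ x ∈ Icc A R, 0 < x := fun x hx => hA.1.trans_le hx.1
  refine accum 0 ξ A R a c (2 * ((m - 1) / A) ^ 2 + 2 * (Cb / A ^ 2) ^ 2) T x0 v vx vt vxx vxt
    (fun _ _ => 0) (fun _ _ => 0) True (v R T ≠ 0) hA.2 hξ.1 hξ.2 (Or.inl rfl) (by positivity)
    cv (D.cvx.mono hs) (D.cvt.mono hs) (D.cvxx.mono hs) (D.cvxt.mono hs) continuousOn_const continuousOn_const
    (fun x hx t ht => D.dvx x (hx' x hx) t (ho t ht)) (fun x hx t ht => D.dvxx x (hx' x hx) t (ho t ht))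
    (fun x hx t ht => D.dvtx x (hx' x hx) t (ho t ht))
    (fun x hx t ht => D.dvt x (Ioo_subset_Icc_self (hx' x hx)) t (ho t ht))
    (fun x hx t ht => D.dvxt x (Ioo_subset_Icc_self (hx' x hx)) t (ho t ht))
    (fun x hx t ht => hasDerivAt_const _ _)
    (fun x hx t ht => by simpa using hasDerivAt_const x (0:ℝ))
    (by simp) (by simp) ?_ ⟨ha2, hc1⟩ (fun _ => hvA) id (Or.inl trivial) ?_ ⟨hx1, hx3.2⟩ hvx0 hfl
  · intro x hx t ht
    have hx0 : 0 < x := hA.1.trans hx.1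
    have e := D.pde x (hx' x hx) t (ho t ht)
    have hb : |b x t| ≤ Cb := hCb (x, t) ⟨Ioo_subset_Icc_self hx, Ioo_subset_Icc_self ht⟩
    simp only [Nat.cast_zero, zero_div, zero_mul, add_zero, sub_zero]
    have e2 : vt x t - vxx x t = ((m : ℝ) - 1) / x * vx x t - b x t / x ^ 2 * v x t := by rw [e]; ring
    rw [e2]
    have m1 : (0:ℝ) ≤ m - 1 := by
      have : (2:ℝ) ≤ m := by exact_mod_cast D.hm
      linarith
    have b1 : (((m : ℝ) - 1) / x) ^ 2 ≤ ((m - 1) / A) ^ 2 := by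
      have := hA.1; have := hx.1.le
      gcongr
    have b2 : (b x t / x ^ 2) ^ 2 ≤ (Cb / A ^ 2) ^ 2 := by
      refine sq_le_sq' ?_ ?_
      · have : |b x t| / x ^ 2 ≤ Cb / A ^ 2 := by
          have := hA.1; have := hx.1.le; have := (abs_nonneg _).trans hb
          gcongr
        have h4 : |b x t / x ^ 2| ≤ Cb / A ^ 2 := by rwa [abs_div, abs_of_pos (by positivity : 0 < x ^ 2)]
        exact (abs_le.1 h4).1
      · have : |b x t| / x ^ 2 ≤ Cb / A ^ 2 := by
          have := hA.1; have := hx.1.le; have := (abs_nonneg _).trans hb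
          gcongr
        have h4 : |b x t / x ^ 2| ≤ Cb / A ^ 2 := by rwa [abs_div, abs_of_pos (by positivity : 0 < x ^ 2)]
        exact (abs_le.1 h4).2
    set p := ((m : ℝ) - 1) / x
    set q := b x t / x ^ 2
    have s1 := mul_le_mul_of_nonneg_right b1 (sq_nonneg (vx x t))
    have s2 := mul_le_mul_of_nonneg_right b2 (sq_nonneg (v x t))
    have s3 : 0 ≤ ((m - 1) / A) ^ 2 * v x t ^ 2 := by positivity
    have s4 : 0 ≤ (Cb / A ^ 2) ^ 2 * vx x t ^ 2 := by positivity
    nlinarith [sq_nonneg (p * vx x t + q * v x t)]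
  · rcases hbR with h | h
    · exact Or.inr fun t ht => ⟨h t (ho t ht),
        zero_dt t1 t2 R v vt (D.dvt R ⟨D.hR.le, le_rfl⟩) h t (ho t ht)⟩
    · exact Or.inl h

lemma fin_k (m : ℕ) (R t1 t2 : ℝ) (b v vx vt vxx vxt : ℝ → ℝ → ℝ)
    (D : VD m R t1 t2 b v vx vt vxx vxt) (T B : ℝ) (hT : T ∈ Ioo t1 t2) (hB : B ∈ Ioo 0 R)
    (hvB : v B T ≠ 0) :
    ¬ ∀ δ > 0, {x ∈ Icc 0 B | v x T = 0 ∧ |x - 0| < δ}.Infinite := by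
  intro hacc
  have hfl := fun M => flat 0 B 0 hB.1 ⟨le_rfl, hB.1.le⟩ M (fun x => v x T)
    (slice_smooth R t1 t2 0 B T le_rfl hB.2.le hT v D.hv) hacc
  obtain ⟨a, ha1, ha2⟩ := exists_between hT.1
  obtain ⟨c, hc1, hc2⟩ := exists_between hT.2
  have hs : Icc 0 B ×ˢ Icc a c ⊆ Icc 0 R ×ˢ Ioo t1 t2 :=
    prod_mono (Icc_subset_Icc_right hB.2.le) (fun t ht => ⟨ha1.trans_le ht.1, ht.2.trans_lt hc2⟩)
  have cv := D.hv.continuousOn.mono hs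
  have ho : ∀ t, t ∈ Ioo a c → t ∈ Ioo t1 t2 := fun t ht => ⟨ha1.trans ht.1, ht.2.trans hc2⟩
  have hi : ∀ t, t ∈ Icc a c → t ∈ Ioo t1 t2 := fun t ht => ⟨ha1.trans_le ht.1, ht.2.trans_lt hc2⟩
  have hx' : ∀ x, x ∈ Ioo 0 B → x ∈ Ioo 0 R := fun x hx => ⟨hx.1, hx.2.trans hB.2⟩
  have hTac : T ∈ Icc a c := ⟨ha2.le, hc1.le⟩
  obtain ⟨δ, hδ, hn⟩ := nbhd_ne 0 B a c B T v True cv ⟨hB.1.le, le_rfl⟩ hTac (fun _ => hvB)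
  obtain ⟨x0, hx1, hx2⟩ := exists_between (max_lt (sub_lt_self B hδ) hB.1)
  have hx3 := max_lt_iff.1 hx1
  have hvx0 : v x0 T ≠ 0 := hn trivial x0 ⟨hx3.2.le, hx2.le⟩ T hTac
    (abs_le.2 ⟨by linarith, by linarith⟩) (by simpa using hδ.le)
  have vt0 : ∀ t ∈ Ioo t1 t2, vt 0 t = 0 := zero_dt t1 t2 0 v vt (D.dvt 0 ⟨le_rfl, D.hR.le⟩) D.hv0
  obtain ⟨z, cz, hz⟩ := hadamard B a c hB.1 (ha2.trans hc1).le v vx cv (D.cvx.mono hs)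
    (fun x hx t ht => D.dvx x (hx' x hx) t (hi t ht)) (fun t ht => D.hv0 t (hi t ht))
  obtain ⟨zt, czt, hzt⟩ := hadamard B a c hB.1 (ha2.trans hc1).le vt vxt (D.cvt.mono hs) (D.cvxt.mono hs)
    (fun x hx t ht => D.dvtx x (hx' x hx) t (hi t ht)) (fun t ht => vt0 t (hi t ht))
  have hze : ∀ x ∈ Ioo 0 B, ∀ t ∈ Icc a c, z x t = v x t / x := fun x hx t ht => by
    rw [eq_div_iff hx.1.ne', hz x (Ioo_subset_Icc_self hx) t ht]
  have hzte : ∀ x ∈ Ioo 0 B, ∀ t ∈ Icc a c, zt x t = vt x t / x := fun x hx t ht => by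
    rw [eq_div_iff hx.1.ne', hzt x (Ioo_subset_Icc_self hx) t ht]
  obtain ⟨bx, _, _, _, cbx, -, -, -, dbx, -⟩ := smooth_data R t1 t2 D.hR b D.hb
  obtain ⟨Cb, hCb⟩ := ((isCompact_Icc (a := 0) (b := B)).prod (isCompact_Icc (a := a) (b := c))).exists_bound_of_continuousOn
    (cbx.mono hs)
  have hbk : ∀ x ∈ Ioo 0 B, ∀ t ∈ Icc a c, |b x t - (m - 1)| ≤ Cb * x := by
    intro x hx t ht
    obtain ⟨y, hy, hyx⟩ := exists_hasDerivAt_eq_slope (fun y => b y t) (fun y => bx y t) hx.1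
      (D.hb.continuousOn.comp (f := fun y : ℝ => (y, t)) (by fun_prop)
        (fun y hy => ⟨⟨hy.1, hy.2.trans (hx.2.le.trans hB.2.le)⟩, hi t ht⟩))
      (fun y hy => dbx y ⟨hy.1, hy.2.trans (hx.2.trans hB.2)⟩ t (hi t ht))
    have h1 := hCb (y, t) ⟨⟨hy.1.le, hy.2.le.trans hx.2.le⟩, ht⟩
    simp only [Real.norm_eq_abs] at h1
    rw [D.hb0 t (hi t ht), sub_zero, eq_div_iff hx.1.ne'] at hyx
    rw [← hyx, abs_mul, abs_of_pos hx.1]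
    exact mul_le_mul_of_nonneg_right h1 hx.1.le
  have hm1 : 1 ≤ m := by have := D.hm; omega
  have kc : ((m - 1 : ℕ) : ℝ) = m - 1 := by push_cast [hm1]; ring
  have k1 : (1:ℝ) ≤ ((m - 1 : ℕ) : ℝ) := by
    have : (2:ℝ) ≤ m := by exact_mod_cast D.hm
    rw [kc]; linarith
  refine accum (m - 1) 0 0 B a c (Cb ^ 2) T x0 v vx vt vxx vxt
    z zt False True hB.1 le_rfl hB.1.le (Or.inr rfl) (by positivity)
    cv (D.cvx.mono hs) (D.cvt.mono hs) (D.cvxx.mono hs) (D.cvxt.mono hs) cz czt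
    (fun x hx t ht => D.dvx x (hx' x hx) t (ho t ht)) (fun x hx t ht => D.dvxx x (hx' x hx) t (ho t ht))
    (fun x hx t ht => D.dvtx x (hx' x hx) t (ho t ht))
    (fun x hx t ht => D.dvt x (Ioo_subset_Icc_self (hx' x hx)) t (ho t ht))
    (fun x hx t ht => D.dvxt x (Ioo_subset_Icc_self (hx' x hx)) t (ho t ht))
    ?_ ?_ ?_ ?_ ?_ ⟨ha2, hc1⟩ (fun h => h.elim) (fun _ => hvB)
    (Or.inr fun t ht => ⟨D.hv0 t (ho t ht), vt0 t (ho t ht)⟩) (Or.inl trivial) ⟨hx3.2, hx2⟩ hvx0 hfl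
  · intro x hx t ht
    have h1 := (D.dvt x (Ioo_subset_Icc_self (hx' x hx)) t (ho t ht)).div_const x
    rw [← hzte x hx t (Ioo_subset_Icc_self ht)] at h1
    refine h1.congr_of_eventuallyEq ?_
    filter_upwards [isOpen_Ioo.mem_nhds ht] with s hs using hze x hx s (Ioo_subset_Icc_self hs)
  · intro x hx t ht
    have h1 := (D.dvx x (hx' x hx) t (ho t ht)).fun_div (hasDerivAt_id x) hx.1.ne'
    have h2 : HasDerivAt (fun y => z y t) ((vx x t - z x t) / (x - 0)) x := by
      refine (h1.congr_of_eventuallyEq ?_).congr_deriv ?_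
      · filter_upwards [isOpen_Ioo.mem_nhds hx] with y hy using hze y hy t (Ioo_subset_Icc_self ht)
      · rw [hze x hx t (Ioo_subset_Icc_self ht)]
        have := hx.1.ne'
        simp only [id]
        field_simp
        ring
    exact h2.const_mul _
  · intro x hx t ht
    rw [sub_zero, hz x hx t (Ioo_subset_Icc_self ht)]
  · intro x hx t ht
    rw [sub_zero, hzt x hx t (Ioo_subset_Icc_self ht)]
  · intro x hx t ht
    have e := D.pde x (hx' x hx) t (ho t ht)
    have ht' := Ioo_subset_Icc_self ht
    have hzx := hze x hx t ht'
    have hb := hbk x hx t ht'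
    have x0 := hx.1
    rw [kc] at k1 ⊢
    have hvz : v x t = z x t * x := (hz x (Ioo_subset_Icc_self hx) t ht').symm
    have e2 : vt x t - vxx x t - (m - 1) / (x - 0) * vx x t + (m - 1) * z x t / (x - 0)
        = - ((b x t - (m - 1)) / x) * z x t := by
      rw [e, hvz, sub_zero]; field_simp; ring
    rw [e2]
    have h5 : |(b x t - (m - 1)) / x| ≤ Cb := by
      rw [abs_div, abs_of_pos x0, div_le_iff₀ x0]; exact hb
    have h6 : (-((b x t - (m - 1)) / x)) ^ 2 ≤ Cb ^ 2 := by
      rw [neg_sq, ← sq_abs]; exact pow_le_pow_left₀ (abs_nonneg _) h5 2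
    rw [mul_pow]
    refine mul_le_mul h6 ?_ (sq_nonneg _) (sq_nonneg _)
    nlinarith [sq_nonneg (v x t), sq_nonneg (vx x t), sq_nonneg (z x t)]

lemma fin_zeros (m : ℕ) (R t1 t2 : ℝ) (b v vx vt vxx vxt : ℝ → ℝ → ℝ)
    (D : VD m R t1 t2 b v vx vt vxx vxt) (T B : ℝ) (hT : T ∈ Ioo t1 t2) (hB : B ∈ Ioo 0 R)
    (hvB : v B T ≠ 0) (hbR : (∀ t ∈ Ioo t1 t2, v R t = 0) ∨ v R T ≠ 0) :
    {x ∈ Icc 0 R | v x T = 0}.Finite := by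
  have h1 := fin_k m R t1 t2 b v vx vt vxx vxt D T B hT hB hvB
  push Not at h1
  obtain ⟨δ, hδ, hfin⟩ := h1
  obtain ⟨x1, hx1, hx1'⟩ := ((Ioo_infinite (lt_min hδ hB.1)).sdiff hfin).nonempty
  have hh := lt_min_iff.1 hx1.2
  have hv1 : v x1 T ≠ 0 := by
    intro h
    refine hx1' ⟨⟨hx1.1.le, hh.2.le⟩, h, ?_⟩
    rw [sub_zero, abs_of_pos hx1.1]; exact hh.1
  have h2 := fin_k0 m R t1 t2 b v vx vt vxx vxt D T x1 hT ⟨hx1.1, hh.2.trans hB.2⟩ hv1 hbR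
  refine (hfin.union h2).subset ?_
  rintro x ⟨hx, hx0⟩
  rcases le_total x x1 with h | h
  · left
    refine ⟨⟨hx.1, h.trans hh.2.le⟩, hx0, ?_⟩
    rw [sub_zero, abs_of_nonneg hx.1]; linarith [hh.1]
  · exact Or.inr ⟨⟨h, hx.2⟩, hx0⟩


lemma q_bound (m : ℕ) (hm : 2 ≤ m) (R t1 t2 a c : ℝ) (hR : 0 < R) (b : ℝ → ℝ → ℝ)
    (hb : ContDiffOn ℝ (⊤ : ℕ∞) (fun p : ℝ × ℝ => b p.1 p.2) (Icc 0 R ×ˢ Ioo t1 t2))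
    (hb0 : ∀ t ∈ Ioo t1 t2, b 0 t = (m : ℝ) - 1)
    (hi : ∀ t, t ∈ Icc a c → t ∈ Ioo t1 t2) :
    ∃ M : ℝ, ∀ r ∈ Ioo 0 R, ∀ t ∈ Icc a c, - (b r t / r ^ 2) ≤ M := by
  obtain ⟨bx, _, _, _, cbx, -, -, -, dbx, -⟩ := smooth_data R t1 t2 hR b hb
  obtain ⟨L, hL⟩ := ((isCompact_Icc (a := 0) (b := R)).prod (isCompact_Icc (a := a) (b := c))).exists_bound_of_continuousOn
    (cbx.mono (prod_mono le_rfl hi))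
  refine ⟨L ^ 2 / 4, fun x hx t ht => ?_⟩
  obtain ⟨y, hy, hyx⟩ := exists_hasDerivAt_eq_slope (fun y => b y t) (fun y => bx y t) hx.1
    (hb.continuousOn.comp (f := fun y : ℝ => (y, t)) (by fun_prop)
      (fun y hy => ⟨⟨hy.1, hy.2.trans hx.2.le⟩, hi t ht⟩))
    (fun y hy => dbx y ⟨hy.1, hy.2.trans hx.2⟩ t (hi t ht))
  have h1 := hL (y, t) ⟨⟨hy.1.le, hy.2.le.trans hx.2.le⟩, ht⟩
  simp only [Real.norm_eq_abs] at h1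
  rw [hb0 t (hi t ht), sub_zero, eq_div_iff hx.1.ne'] at hyx
  have h2 := (abs_le.1 h1).1
  have hx0 := hx.1
  have m2 : (2:ℝ) ≤ m := by exact_mod_cast hm
  have h3 : -L * x ≤ bx y t * x := mul_le_mul_of_nonneg_right h2 hx0.le
  rw [← neg_div, div_le_iff₀ (by positivity)]
  nlinarith [sq_nonneg (L * x / 2 - 1)]

theorem zeros_backward_from_simple
    (m : ℕ) (hm : 2 ≤ m) (R t1 t2 : ℝ) (hR : 0 < R) (ht12 : t1 < t2)
    (b v : ℝ → ℝ → ℝ)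
    (hb_smooth : ContDiffOn ℝ (⊤ : ℕ∞) (fun p : ℝ × ℝ => b p.1 p.2) (Icc 0 R ×ˢ Ioo t1 t2))
    (hb_bdd : ∃ C : ℝ, ∀ r ∈ Icc (0:ℝ) R, ∀ t ∈ Ioo t1 t2, |b r t| ≤ C)
    (hb_deriv_bdd : ∃ C : ℝ, ∀ r ∈ Icc (0:ℝ) R, ∀ t ∈ Ioo t1 t2,
      |deriv (fun x => b x t) r| ≤ C ∧ |deriv (fun s => b r s) t| ≤ C)
    (hb0 : ∀ t ∈ Ioo t1 t2, b 0 t = (m : ℝ) - 1)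
    (hbr0 : ∀ t ∈ Ioo t1 t2, deriv (fun x => b x t) 0 = 0)
    (hv_smooth : ContDiffOn ℝ (⊤ : ℕ∞) (fun p : ℝ × ℝ => v p.1 p.2) (Icc 0 R ×ˢ Ioo t1 t2))
    (hpde : ∀ r ∈ Ioo (0:ℝ) R, ∀ t ∈ Ioo t1 t2,
      deriv (fun s => v r s) t =
        deriv (deriv (fun x => v x t)) r + (((m : ℝ) - 1) / r) * deriv (fun x => v x t) r
          - (b r t / r ^ 2) * v r t)
    (hbcR : (∀ t ∈ Ioo t1 t2, v R t = 0) ∨ (∀ t ∈ Ioo t1 t2, v R t ≠ 0))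
    (hv0 : ∀ t ∈ Ioo t1 t2, v 0 t = 0)
    (hnz : ¬ ∀ r ∈ Icc (0:ℝ) R, ∀ t ∈ Ioo t1 t2, v r t = 0)
    (T1 T2 : ℝ) (hT1 : t1 < T1) (hT12 : T1 < T2) (hT2 : T2 < t2)
    (n : ℕ)
    (hsimple : ∀ r ∈ Icc (0:ℝ) R, v r T2 = 0 → deriv (fun x => v x T2) r ≠ 0)
    (hcard : {r ∈ Icc (0:ℝ) R | v r T2 = 0}.ncard = n + 1) :
    (∃ ζ : Fin (n + 1) → ℝ,
      ζ 0 = 0 ∧ StrictMono ζ ∧ (∀ i, ζ i ≤ R) ∧ ∀ i, v (ζ i) T1 = 0) ∧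
    {r ∈ Icc (0:ℝ) R | v r T2 = 0}.ncard ≤ {r ∈ Icc (0:ℝ) R | v r T1 = 0}.ncard := by
  obtain ⟨vx, vt, vxx, vxt, cvx, cvt, cvxx, cvxt, dvx, dvxx, dvtx, dvt, dvxt⟩ :=
    smooth_data R t1 t2 hR v hv_smooth
  have D : VD m R t1 t2 b v vx vt vxx vxt :=
    { hm := hm, hR := hR, hb := hb_smooth, hb0 := hb0, hv := hv_smooth, hv0 := hv0
      cvx := cvx, cvt := cvt, cvxx := cvxx, cvxt := cvxt, dvx := dvx, dvxx := dvxx, dvtx := dvtx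
      dvt := dvt, dvxt := dvxt
      pde := fun x hx t ht => by
        have h := hpde x hx t ht
        have e1 := (dvt x (Ioo_subset_Icc_self hx) t ht).deriv
        have e2 := (dvx x hx t ht).deriv
        have e3 : deriv (deriv (fun y => v y t)) x = vxx x t := by
          have : deriv (fun y => v y t) =ᶠ[nhds x] fun y => vx y t := by
            filter_upwards [isOpen_Ioo.mem_nhds hx] with y hy using (dvx y hy t ht).deriv
          rw [this.deriv_eq]
          exact (dvxx x hx t ht).deriv
        rw [e1, e2, e3] at h
        exact h }
  have hi : ∀ t, t ∈ Icc T1 T2 → t ∈ Ioo t1 t2 := fun t ht => ⟨hT1.trans_le ht.1, ht.2.trans_lt hT2⟩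
  have mT1 : T1 ∈ Icc T1 T2 := ⟨le_rfl, hT12.le⟩
  have mT2 : T2 ∈ Icc T1 T2 := ⟨hT12.le, le_rfl⟩
  have sl : ∀ t ∈ Ioo t1 t2, ContinuousOn (fun x => v x t) (Icc 0 R) := fun t ht =>
    (slice_smooth R t1 t2 0 R t le_rfl le_rfl ht v hv_smooth).continuousOn
  obtain ⟨y, hy, hyR, hyne, hyalt, hylast⟩ := alt_points R hR (fun x => v x T2) (sl T2 (hi _ mT2)) n hsimple hcard
  obtain ⟨M, hM⟩ := q_bound m hm R t1 t2 T1 T2 hR b hb_smooth hb0 hi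
  have hlast : ∀ i : Fin n, (i : ℕ) + 1 = n → ∀ t ∈ Icc T1 T2, v (y i) T2 * v R t ≤ 0 := by
    intro i hin t ht
    rcases hbcR with h | h
    · rw [h t (hi t ht), mul_zero]
    · have h1 := same_sign (fun s => v R s) t T2 ht.2
        (hv_smooth.continuousOn.comp (f := fun s : ℝ => (R, s)) (by fun_prop)
          (fun s hs => ⟨⟨hR.le, le_rfl⟩, hi s ⟨ht.1.trans hs.1, hs.2⟩⟩))
        (fun s hs => h s (hi s ⟨ht.1.trans hs.1, hs.2⟩))
      have h2 : v (y i) T2 * v R T2 ≤ 0 := hylast i hin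
      by_contra hlt
      push Not at hlt
      have h3 := mul_pos h1 hlt
      have h4 : 0 < v R t ^ 2 := by have := h t (hi t ht); positivity
      nlinarith [mul_nonneg h4.le (neg_nonneg.2 h2)]
  obtain ⟨x, hx, hxR, hcx⟩ := signs_back R T1 T2 M hT12.le n v vx vt vxx (fun r _ => ((m : ℝ) - 1) / r)
    (fun r t => b r t / r ^ 2)
    (hv_smooth.continuousOn.mono (prod_mono le_rfl hi))
    (fun r hr t ht => dvx r hr t (hi t ht)) (fun r hr t ht => dvxx r hr t (hi t ht))
    (fun r hr t ht => dvt r (Ioo_subset_Icc_self hr) t (hi t ht))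
    (fun r hr t ht => D.pde r hr t (hi t ht)) hM (fun t ht => hv0 t (hi t ht))
    (fun i => v (y i) T2) y hy hyR (fun i => mul_self_pos.2 (hyne i)) hyalt hlast
  obtain ⟨ζ, hζ0, hζm, hζR, hζz⟩ := alt_zeros R hR (fun x => v x T1) (sl T1 (hi _ mT1)) n (hv0 T1 (hi _ mT1))
    (fun i => v (y i) T2) x hx hxR hcx hyalt (fun i hin => hlast i hin T1 mT1)
  refine ⟨⟨ζ, hζ0, hζm, hζR, hζz⟩, ?_⟩
  have hbR : (∀ t ∈ Ioo t1 t2, v R t = 0) ∨ v R T1 ≠ 0 := hbcR.imp id fun h => h T1 (hi _ mT1)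
  have hB : ∃ B ∈ Ioo 0 R, v B T1 ≠ 0 := by
    rcases Nat.eq_zero_or_pos n with hn | hn
    · subst hn
      have hvR2 : v R T2 ≠ 0 := by
        intro h
        obtain ⟨s, hs⟩ := Set.ncard_eq_one.1 hcard
        have a1 : (0:ℝ) ∈ {r ∈ Icc (0:ℝ) R | v r T2 = 0} := ⟨⟨le_rfl, hR.le⟩, hv0 T2 (hi _ mT2)⟩
        have a2 : R ∈ {r ∈ Icc (0:ℝ) R | v r T2 = 0} := ⟨⟨hR.le, le_rfl⟩, h⟩
        rw [hs] at a1 a2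
        simp only [mem_singleton_iff] at a1 a2
        linarith
      have hvR1 : v R T1 ≠ 0 := by
        rcases hbcR with h | h
        · exact absurd (h T2 (hi _ mT2)) hvR2
        · exact h T1 (hi _ mT1)
      have hc : ∀ᶠ x in nhdsWithin R (Icc 0 R), v x T1 ≠ 0 :=
        (sl T1 (hi _ mT1) R ⟨hR.le, le_rfl⟩).eventually_ne hvR1
      obtain ⟨δ, hδ, hball⟩ := Metric.mem_nhdsWithin_iff.1 hc
      obtain ⟨w, hw1, hw2⟩ := exists_between (max_lt (sub_lt_self R hδ) hR)
      have hw3 := max_lt_iff.1 hw1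
      refine ⟨w, ⟨hw3.2, hw2⟩, hball ⟨?_, hw3.2.le, hw2.le⟩⟩
      rw [Metric.mem_ball, Real.dist_eq, abs_lt]
      constructor <;> linarith
    · refine ⟨x ⟨0, hn⟩, hxR _, fun h => ?_⟩
      have := hcx ⟨0, hn⟩
      rw [h, mul_zero] at this
      exact lt_irrefl _ this
  obtain ⟨B, hBm, hvB⟩ := hB
  have hfin := fin_zeros m R t1 t2 b v vx vt vxx vxt D T1 B (hi _ mT1) hBm hvB hbR
  rw [hcard]
  have h1 : (range ζ).ncard = n + 1 := by
    rw [← Set.image_univ, Set.ncard_image_of_injective _ hζm.injective, Set.ncard_univ]; simp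
  rw [← h1]
  refine Set.ncard_le_ncard ?_ hfin
  rintro _ ⟨i, rfl⟩
  refine ⟨⟨?_, hζR i⟩, hζz i⟩
  rw [← hζ0]
  exact hζm.monotone (Fin.zero_le i)
end

section
/- Backward-in-time extension of nodal components (from the proof of Lemma 2.6): Let v be a classical solution of v_t = v_rr + ((m−1)/r) v_r − (b(r,t)/r²) v on [0,R] × (t1,t2), not identically zero, satisfying the boundary condition (1.5) and v(0,t) = 0 for all t ∈ (t1,t2), and let T2 ∈ (t1,t2). Let Ω be a connected component of the set {(r,t) ∈ [0,R] × (t1,T2] : v(r,t) ≠ 0} that contains a point of the form (r̄, T2). Then for every t ∈ (t1, T2), the slice Ω ∩ ([0,R] × {t}) is nonempty. -/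
open Set Filter

theorem second_deriv_nonpos {f : ℝ → ℝ} {x : ℝ} (h : IsLocalMax f x) (hc : ContinuousAt f x) :
    deriv (deriv f) x ≤ 0 := by
  by_contra hcon
  push Not at hcon
  have h1 := isLocalMin_of_deriv_deriv_pos hcon h.deriv_eq_zero hc
  have h2 : f =ᶠ[nhds x] fun _ => f x := by
    filter_upwards [h, h1] with y hy hy'
    exact le_antisymm hy hy'
  have h3 : deriv (deriv f) x = 0 := by
    rw [h2.deriv.deriv_eq]
    simp
  linarith

theorem left_deriv_nonneg {f : ℝ → ℝ} {d x : ℝ} (hd : HasDerivAt f d x)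
    (h : ∀ᶠ y in nhdsWithin x (Iio x), f y ≤ f x) : 0 ≤ d := by
  have h1 := (hasDerivWithinAt_iff_tendsto_slope' (s := Iio x) (by simp)).1 hd.hasDerivWithinAt
  refine ge_of_tendsto h1 ?_
  filter_upwards [h, self_mem_nhdsWithin] with y hy hyx
  have : y < x := hyx
  rw [slope_def_field]
  exact div_nonneg_of_nonpos (by linarith) (by linarith)

theorem comp_mem {S : Set (ℝ × ℝ)} {x p q : ℝ × ℝ} {U : Set (ℝ × ℝ)} (hp : p ∈ connectedComponentIn S x)
    (hU : IsPreconnected U) (hpU : p ∈ U) (hUS : U ⊆ S) (hq : q ∈ U) :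
    q ∈ connectedComponentIn S x := by
  rw [connectedComponentIn_eq hp]
  exact hU.subset_connectedComponentIn hpU hUS hq

theorem nodal_pos
    (m : ℕ) (hm : 2 ≤ m) (R t1 t2 : ℝ) (hR : 0 < R) (ht12 : t1 < t2)
    (b v : ℝ → ℝ → ℝ)
    (hb_smooth : ContDiffOn ℝ (⊤ : ℕ∞) (fun p : ℝ × ℝ => b p.1 p.2) (Icc 0 R ×ˢ Ioo t1 t2))
    (hb_bdd : ∃ C : ℝ, ∀ r ∈ Icc (0:ℝ) R, ∀ t ∈ Ioo t1 t2, |b r t| ≤ C)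
    (hb_deriv_bdd : ∃ C : ℝ, ∀ r ∈ Icc (0:ℝ) R, ∀ t ∈ Ioo t1 t2,
      |deriv (fun x => b x t) r| ≤ C ∧ |deriv (fun s => b r s) t| ≤ C)
    (hb0 : ∀ t ∈ Ioo t1 t2, b 0 t = (m : ℝ) - 1)
    (hbr0 : ∀ t ∈ Ioo t1 t2, deriv (fun x => b x t) 0 = 0)
    (hv_smooth : ContDiffOn ℝ (⊤ : ℕ∞) (fun p : ℝ × ℝ => v p.1 p.2) (Icc 0 R ×ˢ Ioo t1 t2))
    (hpde : ∀ r ∈ Ioo (0:ℝ) R, ∀ t ∈ Ioo t1 t2,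
      deriv (fun s => v r s) t =
        deriv (deriv (fun x => v x t)) r + (((m : ℝ) - 1) / r) * deriv (fun x => v x t) r
          - (b r t / r ^ 2) * v r t)
    (hbcR : (∀ t ∈ Ioo t1 t2, v R t = 0) ∨ (∀ t ∈ Ioo t1 t2, v R t ≠ 0))
    (hv0 : ∀ t ∈ Ioo t1 t2, v 0 t = 0)
    (hnz : ¬ ∀ r ∈ Icc (0:ℝ) R, ∀ t ∈ Ioo t1 t2, v r t = 0)
    (T2 : ℝ) (hT2 : T2 ∈ Ioo t1 t2) (rbar : ℝ) (hrbar : rbar ∈ Icc (0:ℝ) R)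
    (hvbar : 0 < v rbar T2) :
    ∀ t ∈ Ioo t1 T2, ∃ r ∈ Icc (0:ℝ) R,
      (r, t) ∈ connectedComponentIn
        {p : ℝ × ℝ | p.1 ∈ Icc (0:ℝ) R ∧ p.2 ∈ Ioc t1 T2 ∧ v p.1 p.2 ≠ 0} (rbar, T2) := by
  intro t0 ht0
  by_contra hne
  push Not at hne
  set S : Set (ℝ × ℝ) := {p : ℝ × ℝ | p.1 ∈ Icc (0:ℝ) R ∧ p.2 ∈ Ioc t1 T2 ∧ v p.1 p.2 ≠ 0} with hS
  set C := connectedComponentIn S (rbar, T2) with hC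
  have hbS : (rbar, T2) ∈ S := ⟨hrbar, ⟨hT2.1, le_rfl⟩, hvbar.ne'⟩
  have hbC : (rbar, T2) ∈ C := mem_connectedComponentIn hbS
  have hCS : C ⊆ S := connectedComponentIn_subset _ _
  have hCpre : IsPreconnected C := isPreconnected_connectedComponentIn
  have hCt : ∀ p ∈ C, t0 < p.2 := by
    intro p hp
    by_contra hle
    push Not at hle
    have hi := hCpre.image Prod.snd continuous_snd.continuousOn
    obtain ⟨q, hq, hqt⟩ := hi.ordConnected.out ⟨p, hp, rfl⟩ ⟨_, hbC, rfl⟩ ⟨hle, ht0.2.le⟩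
    apply hne q.1 (hCS hq).1
    have : (q.1, t0) = q := by rw [← hqt]
    rw [this]; exact hq
  set Q : Set (ℝ × ℝ) := Icc 0 R ×ˢ Icc t0 T2 with hQ
  have hQc : IsCompact Q := isCompact_Icc.prod isCompact_Icc
  have hQD : Q ⊆ Icc 0 R ×ˢ Ioo t1 t2 := by
    rintro p ⟨h1, h2⟩
    exact ⟨h1, lt_of_lt_of_le ht0.1 h2.1, lt_of_le_of_lt h2.2 hT2.2⟩
  have hCQ : closure C ⊆ Q := by
    apply closure_minimal _ hQc.isClosed
    intro p hp
    exact ⟨(hCS hp).1, (hCt p hp).le, (hCS hp).2.1.2⟩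
  have hvc : ContinuousOn (fun p : ℝ × ℝ => v p.1 p.2) Q := hv_smooth.continuousOn.mono hQD
  have hbc : ContinuousOn (fun p : ℝ × ℝ => b p.1 p.2) Q := hb_smooth.continuousOn.mono hQD
  have hm' : (2:ℝ) ≤ m := by exact_mod_cast hm
  -- bound on the potential
  obtain ⟨K, hK0, hK⟩ : ∃ K : ℝ, 0 ≤ K ∧ ∀ p ∈ Q, -(b p.1 p.2 / p.1 ^ 2) ≤ K := by
    set A : Set (ℝ × ℝ) := Q ∩ (fun p : ℝ × ℝ => b p.1 p.2) ⁻¹' Iic 0 with hA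
    have hAc : IsCompact A :=
      hQc.of_isClosed_subset (hbc.preimage_isClosed_of_isClosed hQc.isClosed isClosed_Iic)
        inter_subset_left
    have hgc : ContinuousOn (fun p : ℝ × ℝ => -(b p.1 p.2 / p.1 ^ 2)) A := by
      apply ContinuousOn.neg
      apply ContinuousOn.div (hbc.mono inter_subset_left) (by fun_prop)
      rintro ⟨r, t⟩ ⟨hp, hp'⟩ h0
      have hr : r = 0 := by simpa using h0
      have h1 := hb0 t (hQD hp).2
      have h2 : b r t ≤ 0 := hp'
      rw [hr] at h2
      linarith
    obtain ⟨K, hK⟩ := hAc.bddAbove_image hgc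
    refine ⟨max K 0, le_max_right _ _, fun p hp => ?_⟩
    by_cases hb : b p.1 p.2 ≤ 0
    · exact le_max_of_le_left (hK ⟨p, ⟨hp, hb⟩, rfl⟩)
    · apply le_max_of_le_right
      push Not at hb
      have : 0 ≤ b p.1 p.2 / p.1 ^ 2 := by positivity
      linarith
  -- the maximum
  obtain ⟨⟨r, t⟩, hpcl, hmax⟩ := (hQc.of_isClosed_subset isClosed_closure hCQ).exists_isMaxOn
    ⟨_, subset_closure hbC⟩
    (f := fun p : ℝ × ℝ => v p.1 p.2 * Real.exp (-(K + 1) * p.2))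
    ((hvc.mono hCQ).mul (by fun_prop))
  have hpQ := hCQ hpcl
  have hvp : 0 < v r t := by
    have h1 : v rbar T2 * Real.exp (-(K + 1) * T2) ≤ v r t * Real.exp (-(K + 1) * t) :=
      hmax (subset_closure hbC)
    have h2 : 0 < v rbar T2 * Real.exp (-(K + 1) * T2) := by positivity
    exact pos_of_mul_pos_left (h2.trans_le h1) (Real.exp_pos _).le
  have hpS : (r, t) ∈ S := ⟨hpQ.1, ⟨(hQD hpQ).2.1, hpQ.2.2⟩, hvp.ne'⟩
  have hpC : (r, t) ∈ C := by
    have hpre : IsPreconnected (insert (r, t) C) :=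
      hCpre.subset_closure (subset_insert _ _) (insert_subset hpcl subset_closure)
    exact hpre.subset_connectedComponentIn (mem_insert_of_mem _ hbC)
      (insert_subset hpS hCS) (mem_insert _ _)
  have htD : t ∈ Ioo t1 t2 := (hQD hpQ).2
  have hr0 : 0 < r := by
    rcases hpQ.1.1.eq_or_lt with h | h
    · have h' : (0:ℝ) = r := h
      have := hv0 t htD
      rw [h'] at this
      linarith
    · exact h
  have hrR : r < R := by
    rcases hpQ.1.2.eq_or_lt with h | h
    · exfalso
      have h' : r = R := h
      subst h'
      rcases hbcR with hz | hz
      · have := hz t htD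
        linarith
      · apply hne r hpQ.1
        refine comp_mem (U := {r} ×ˢ Ioc t1 T2) hpC
          (isPreconnected_singleton.prod isPreconnected_Ioc) ⟨rfl, hpS.2.1⟩ ?_ ⟨rfl, ht0.1, ht0.2.le⟩
        rintro ⟨x, s⟩ ⟨hx, hs⟩
        have hx' : x = r := hx
        subst hx'
        exact ⟨hpQ.1, hs, hz s ⟨hs.1, hs.2.trans_lt hT2.2⟩⟩
    · exact h
  have hcda : ContDiffAt ℝ (⊤ : ℕ∞) (fun p : ℝ × ℝ => v p.1 p.2) (r, t) :=
    hv_smooth.contDiffAt (prod_mem_nhds (Icc_mem_nhds hr0 hrR) (Ioo_mem_nhds htD.1 htD.2))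
  have hda : DifferentiableAt ℝ (fun p : ℝ × ℝ => v p.1 p.2) (r, t) :=
    hcda.differentiableAt (by simp)
  -- neighborhood
  have hnhd : ∀ᶠ p in nhds (r, t), 0 < v p.1 p.2 ∧ p.1 ∈ Ioo 0 R ∧ p.2 ∈ Ioi t1 := by
    have e1 : ∀ᶠ p : ℝ × ℝ in nhds (r, t), 0 < v p.1 p.2 :=
      hda.continuousAt.eventually (lt_mem_nhds hvp)
    have e2 : ∀ᶠ p : ℝ × ℝ in nhds (r, t), p.1 ∈ Ioo 0 R :=
      continuous_fst.continuousAt.eventually (Ioo_mem_nhds hr0 hrR)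
    have e3 : ∀ᶠ p : ℝ × ℝ in nhds (r, t), p.2 ∈ Ioi t1 :=
      continuous_snd.continuousAt.eventually (Ioi_mem_nhds htD.1)
    exact e1.and (e2.and e3)
  obtain ⟨ε, hε, hball⟩ := Metric.eventually_nhds_iff_ball.1 hnhd
  have hloc : ∀ p ∈ Metric.ball (r, t) ε, p.2 ≤ T2 →
      v p.1 p.2 * Real.exp (-(K + 1) * p.2) ≤ v r t * Real.exp (-(K + 1) * t) := by
    intro p hp hpT
    refine hmax (subset_closure ?_)
    refine comp_mem (U := Metric.ball (r, t) ε ∩ {q | q.2 ≤ T2}) hpC ?_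
      ⟨Metric.mem_ball_self hε, hpQ.2.2⟩ ?_ ⟨hp, hpT⟩
    · exact ((convex_ball _ _).inter
        (convex_halfSpace_le (f := (Prod.snd : ℝ × ℝ → ℝ)) (LinearMap.snd ℝ ℝ ℝ).isLinear T2)).isPreconnected
    · rintro q ⟨hq, hq'⟩
      obtain ⟨h1, h2, h3⟩ := hball q hq
      exact ⟨Ioo_subset_Icc_self h2, ⟨h3, hq'⟩, h1.ne'⟩
  have hballev := Metric.ball_mem_nhds (r, t) hε
  -- space derivatives
  have hxmax : IsLocalMax (fun x => v x t) r := by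
    have hc : ContinuousAt (fun x : ℝ => (x, t)) r := by fun_prop
    filter_upwards [hc.eventually hballev] with x hx
    exact le_of_mul_le_mul_right (hloc (x, t) hx hpQ.2.2) (Real.exp_pos _)
  have hxc : ContinuousAt (fun x => v x t) r := by
    have hc : ContinuousAt (fun x : ℝ => (x, t)) r := by fun_prop
    exact ContinuousAt.comp (f := fun x : ℝ => (x, t)) (g := fun p : ℝ × ℝ => v p.1 p.2)
      hda.continuousAt hc
  have hrr := second_deriv_nonpos hxmax hxc
  have hr1 := hxmax.deriv_eq_zero
  -- time derivative
  have htd : DifferentiableAt ℝ (fun s => v r s) t := by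
    have hc : DifferentiableAt ℝ (fun s : ℝ => (r, s)) t := by fun_prop
    exact DifferentiableAt.comp (f := fun s : ℝ => (r, s)) (g := fun p : ℝ × ℝ => v p.1 p.2) t
      hda hc
  have hexp : HasDerivAt (fun s => Real.exp (-(K + 1) * s)) (Real.exp (-(K + 1) * t) * (-(K + 1))) t := by
    have := ((hasDerivAt_id t).const_mul (-(K + 1))).exp
    simpa using this
  have hprod := htd.hasDerivAt.mul hexp
  have hnn := left_deriv_nonneg hprod (by
    have hc : ContinuousAt (fun s : ℝ => (r, s)) t := by fun_prop
    filter_upwards [nhdsWithin_le_nhds (hc.eventually hballev), self_mem_nhdsWithin] with s hs hst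
    exact hloc (r, s) hs ((le_of_lt hst).trans hpQ.2.2))
  have hvt : (K + 1) * v r t ≤ deriv (fun s => v r s) t := by
    have h1 : 0 ≤ (deriv (fun s => v r s) t - (K + 1) * v r t) * Real.exp (-(K + 1) * t) := by
      linarith
    have := nonneg_of_mul_nonneg_left h1 (Real.exp_pos _)
    linarith
  have hp := hpde r ⟨hr0, hrR⟩ t htD
  have hKp : -(b r t / r ^ 2) * v r t ≤ K * v r t :=
    mul_le_mul_of_nonneg_right (hK (r, t) hpQ) hvp.le
  rw [hr1] at hp
  linarith

theorem nodal_component_extends_backward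
    (m : ℕ) (hm : 2 ≤ m) (R t1 t2 : ℝ) (hR : 0 < R) (ht12 : t1 < t2)
    (b v : ℝ → ℝ → ℝ)
    (hb_smooth : ContDiffOn ℝ (⊤ : ℕ∞) (fun p : ℝ × ℝ => b p.1 p.2) (Icc 0 R ×ˢ Ioo t1 t2))
    (hb_bdd : ∃ C : ℝ, ∀ r ∈ Icc (0:ℝ) R, ∀ t ∈ Ioo t1 t2, |b r t| ≤ C)
    (hb_deriv_bdd : ∃ C : ℝ, ∀ r ∈ Icc (0:ℝ) R, ∀ t ∈ Ioo t1 t2,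
      |deriv (fun x => b x t) r| ≤ C ∧ |deriv (fun s => b r s) t| ≤ C)
    (hb0 : ∀ t ∈ Ioo t1 t2, b 0 t = (m : ℝ) - 1)
    (hbr0 : ∀ t ∈ Ioo t1 t2, deriv (fun x => b x t) 0 = 0)
    (hv_smooth : ContDiffOn ℝ (⊤ : ℕ∞) (fun p : ℝ × ℝ => v p.1 p.2) (Icc 0 R ×ˢ Ioo t1 t2))
    (hpde : ∀ r ∈ Ioo (0:ℝ) R, ∀ t ∈ Ioo t1 t2,
      deriv (fun s => v r s) t =
        deriv (deriv (fun x => v x t)) r + (((m : ℝ) - 1) / r) * deriv (fun x => v x t) r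
          - (b r t / r ^ 2) * v r t)
    (hbcR : (∀ t ∈ Ioo t1 t2, v R t = 0) ∨ (∀ t ∈ Ioo t1 t2, v R t ≠ 0))
    (hv0 : ∀ t ∈ Ioo t1 t2, v 0 t = 0)
    (hnz : ¬ ∀ r ∈ Icc (0:ℝ) R, ∀ t ∈ Ioo t1 t2, v r t = 0)
    (T2 : ℝ) (hT2 : T2 ∈ Ioo t1 t2) (rbar : ℝ) (hrbar : rbar ∈ Icc (0:ℝ) R)
    (hvbar : v rbar T2 ≠ 0) :
    ∀ t ∈ Ioo t1 T2, ∃ r ∈ Icc (0:ℝ) R,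
      (r, t) ∈ connectedComponentIn
        {p : ℝ × ℝ | p.1 ∈ Icc (0:ℝ) R ∧ p.2 ∈ Ioc t1 T2 ∧ v p.1 p.2 ≠ 0} (rbar, T2) := by
  rcases hvbar.lt_or_gt with h | h
  · have := nodal_pos m hm R t1 t2 hR ht12 b (fun r t => -v r t) hb_smooth hb_bdd hb_deriv_bdd hb0
      hbr0 hv_smooth.neg (by
        intro r hr t ht
        have e : deriv (fun x => -v x t) = fun x => -deriv (fun x => v x t) x := by
          funext x; exact deriv.fun_neg
        have e1 : deriv (fun s => -v r s) t = -deriv (fun s => v r s) t := deriv.fun_neg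
        have e2 : deriv (fun x => -deriv (fun x => v x t) x) r
            = -deriv (deriv (fun x => v x t)) r := deriv.fun_neg
        simp only [e, e1, e2, hpde r hr t ht]
        ring) (by simpa using hbcR) (by simpa using hv0) (by simpa using hnz) T2 hT2 rbar hrbar
        (by simpa using h)
    simpa only [ne_eq, neg_eq_zero] using this
  · exact nodal_pos m hm R t1 t2 hR ht12 b v hb_smooth hb_bdd hb_deriv_bdd hb0
      hbr0 hv_smooth hpde hbcR hv0 hnz T2 hT2 rbar hrbar h
end
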